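/- Let h ≥ 2 be an integer and let S_h(x) denote the set of h-free ideals of O_K with norm at most x. Then for every γ ∈ ℝ, lim_{x → ∞} (1/|S_h(x)|) · |{m ∈ S_h(x) : N(m) ≥ 3, (ω(m) − log log N(m)) / √(log log N(m)) ≤ γ}| = Φ(γ). -/

import Mathlib

open Filter MeasureTheory Topology
open scoped BigOperators

noncomputable section

variable (K : Type) [Field K] [NumberField K]

/-- The standard Gaussian distribution function Φ. -/
def gaussPhi (γ : ℝ) : ℝ :=
  (Real.sqrt (2 * Real.pi))⁻¹ * ∫ u in Set.Iic γ, Real.exp (-u ^ 2 / 2)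

/-- Number of distinct prime ideal divisors of an ideal. -/
def omegaI (m : Ideal (NumberField.RingOfIntegers K)) : ℕ :=
  Nat.card {p : Ideal (NumberField.RingOfIntegers K) // p.IsPrime ∧ p ∣ m}

/-- `m` is an `h`-free ideal: no prime ideal divides `m` to order `h` or more. -/
def IsHFree (h : ℕ) (m : Ideal (NumberField.RingOfIntegers K)) : Prop :=
  m ≠ 0 ∧ ∀ p : Ideal (NumberField.RingOfIntegers K), p.IsPrime → ¬ p ^ h ∣ m

namespace EK
open scoped Pointwise
theorem thick_face {E : Type*} [NormedAddCommGroup E] [NormedSpace ℝ E] [FiniteDimensional ℝ E]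
    [MeasurableSpace E] [BorelSpace E] (μ : Measure E) [μ.IsAddHaarMeasure]
    {ι : Type*} [Fintype ι] (hι : Fintype.card ι = Module.finrank ℝ E)
    (f : (ι → ℝ) → E) (L : NNReal) (hf : LipschitzOnWith L f (Set.Icc 0 1)) (i : ι) (a : ℝ) :
    ∃ C : ℝ, 0 ≤ C ∧ ∀ ε : ℝ, 0 < ε → ε ≤ 1 →
      μ (Metric.thickening ε (f '' {q | q ∈ Set.Icc 0 1 ∧ q i = a})) ≤ ENNReal.ofReal (C * ε) := by
  classical
  set n := Module.finrank ℝ E with hn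
  have hn1 : 1 ≤ n := by rw [← hι]; exact Fintype.card_pos_iff.mpr ⟨i⟩
  set B := (μ (Metric.ball (0:E) 1)).toReal with hB
  have hBfin : μ (Metric.ball (0:E) 1) ≠ ⊤ := measure_ball_lt_top.ne
  refine ⟨3 ^ (n-1) * (L+1)^n * B, by positivity, fun ε hε hε1 => ?_⟩
  set N := ⌈1/ε⌉₊ with hN
  have hN1 : 1/ε ≤ N := Nat.le_ceil _
  have hN2 : (N:ℝ) + 1 ≤ 3/ε := by
    have h1 : (N:ℝ) < 1/ε + 1 := Nat.ceil_lt_add_one (by positivity)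
    have h2 : 1 ≤ 1/ε := by rw [le_div_iff₀ hε]; linarith
    have : 3/ε = 3 * (1/ε) := by ring
    linarith
  have hNpos : (0:ℝ) < N := lt_of_lt_of_le (by positivity) hN1
  let cell : ({j // j ≠ i} → Fin (N+1)) → Set (ι → ℝ) := fun k =>
    {q | (q ∈ Set.Icc 0 1 ∧ q i = a) ∧ ∀ j : {j // j ≠ i}, ⌊N * q j⌋₊ = (k j : ℕ)}
  have hcover : Metric.thickening ε (f '' {q | q ∈ Set.Icc 0 1 ∧ q i = a}) ⊆
      ⋃ k, Metric.thickening ε (f '' cell k) := by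
    intro x hx
    rw [Metric.mem_thickening_iff] at hx
    obtain ⟨_, ⟨q, hq, rfl⟩, hx⟩ := hx
    refine Set.mem_iUnion.mpr ⟨fun j => ⟨⌊N * q j⌋₊, ?_⟩, ?_⟩
    · have h1 : q j ≤ 1 := hq.1.2 j
      have : ⌊N * q j⌋₊ ≤ N := by
        apply Nat.floor_le_of_le
        nlinarith
      omega
    · rw [Metric.mem_thickening_iff]
      exact ⟨_, ⟨q, ⟨hq, fun j => rfl⟩, rfl⟩, hx⟩
  have hcell : ∀ k, μ (Metric.thickening ε (f '' cell k)) ≤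
      ENNReal.ofReal (((L+1) * ε)^n * B) := by
    intro k
    rcases (cell k).eq_empty_or_nonempty with h | ⟨q0, hq0⟩
    · simp [h]
    · have hsub : Metric.thickening ε (f '' cell k) ⊆ Metric.ball (f q0) ((L+1)*ε) := by
        intro x hx
        rw [Metric.mem_thickening_iff] at hx
        obtain ⟨_, ⟨q, hq, rfl⟩, hx⟩ := hx
        have hd : dist q q0 ≤ ε := by
          rw [dist_pi_le_iff hε.le]
          intro j
          by_cases hj : j = i
          · subst hj
            rw [hq.1.2, hq0.1.2, dist_self]; exact hε.le
          · have h1 := hq.2 ⟨j, hj⟩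
            have h2 := hq0.2 ⟨j, hj⟩
            simp only at h1 h2
            have e1 := Nat.floor_le (a := N * q j) (mul_nonneg hNpos.le (hq.1.1.1 j))
            have e2 := Nat.lt_floor_add_one (N * q j)
            have e3 := Nat.floor_le (a := N * q0 j) (mul_nonneg hNpos.le (hq0.1.1.1 j))
            have e4 := Nat.lt_floor_add_one (N * q0 j)
            rw [h1] at e1 e2
            rw [h2] at e3 e4
            have h3 : N * |q j - q0 j| ≤ 1 := by
              rw [← abs_of_pos hNpos, ← abs_mul, abs_le]
              constructor <;> linarith
            rw [Real.dist_eq]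
            have h4 : 1 ≤ N * ε := by
              rwa [div_le_iff₀ hε] at hN1
            have : N * |q j - q0 j| ≤ N * ε := h3.trans h4
            exact le_of_mul_le_mul_left this hNpos
        have h5 := hf.dist_le_mul q hq.1.1 q0 hq0.1.1
        rw [Metric.mem_ball]
        calc dist x (f q0) ≤ dist x (f q) + dist (f q) (f q0) := dist_triangle _ _ _
          _ < ε + L * ε := by
            have : (L:ℝ) * dist q q0 ≤ L * ε := by gcongr
            linarith
          _ = (L+1)*ε := by ring
      refine (measure_mono hsub).trans ?_
      rw [Measure.addHaar_ball_of_pos μ _ (by positivity), ENNReal.ofReal_mul (by positivity), hB,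
        ENNReal.ofReal_toReal hBfin]
  calc μ (Metric.thickening ε (f '' {q | q ∈ Set.Icc 0 1 ∧ q i = a}))
      ≤ μ (⋃ k, Metric.thickening ε (f '' cell k)) := measure_mono hcover
    _ ≤ ∑' k, μ (Metric.thickening ε (f '' cell k)) := measure_iUnion_le _
    _ = ∑ k, μ (Metric.thickening ε (f '' cell k)) := tsum_fintype _
    _ ≤ ∑ k : ({j // j ≠ i} → Fin (N+1)), ENNReal.ofReal (((L+1) * ε)^n * B) :=
        Finset.sum_le_sum fun k _ => hcell k
    _ = ENNReal.ofReal ((N+1)^(n-1) * (((L+1) * ε)^n * B)) := by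
        rw [Finset.sum_const, Finset.card_univ, Fintype.card_fun, Fintype.card_fin, nsmul_eq_mul,
          ENNReal.ofReal_mul (by positivity)]
        rw [Fintype.card_subtype_compl, Fintype.card_subtype_eq, hι]
        rw [ENNReal.ofReal_mul (by positivity), ENNReal.ofReal_mul (by positivity)]
        congr 1
        rw [← ENNReal.ofReal_natCast]
        push_cast; rfl
    _ ≤ _ := by
        apply ENNReal.ofReal_le_ofReal
        calc ((N:ℝ)+1)^(n-1) * (((L+1) * ε)^n * B) ≤ (3/ε)^(n-1) * (((L+1) * ε)^n * B) := by gcongr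
          _ = 3 ^ (n-1) * (L+1)^n * B * ε := by
            obtain ⟨m, hm⟩ : ∃ m, n = m + 1 := ⟨n-1, by omega⟩
            rw [hm, Nat.add_sub_cancel, div_pow, mul_pow]
            field_simp
            ring

/-- a segment from inside to outside meets the frontier -/
theorem mem_cthick_frontier {E : Type*} [NormedAddCommGroup E] [NormedSpace ℝ E]
    {A : Set E} {x v : E} {d : ℝ} (hx : x ∉ A) (hv : v ∈ A) (hd : dist x v < d) :
    x ∈ Metric.thickening d (frontier A) ∧ v ∈ Metric.thickening d (frontier A) := by
  have hpre : IsPreconnected (segment ℝ x v) := (convex_segment x v).isPreconnected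
  have h1 : (segment ℝ x v ∩ frontier A).Nonempty := by
    by_contra hne
    rw [Set.not_nonempty_iff_eq_empty] at hne
    have h2 := hpre.subset_or_subset (u := interior A) (v := interior Aᶜ) isOpen_interior
      isOpen_interior (by
        rw [Set.disjoint_left]
        intro y hy hy'
        exact interior_subset hy' (interior_subset hy)) (by
        intro y hy
        by_contra hcon
        have : y ∈ frontier A := by
          rw [frontier_eq_closure_inter_closure, ← compl_compl (closure A),
            ← compl_compl (closure Aᶜ), ← interior_compl, ← interior_compl, compl_compl]
          simp only [Set.mem_union, not_or] at hcon
          exact ⟨hcon.2, hcon.1⟩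
        have : y ∈ segment ℝ x v ∩ frontier A := ⟨hy, this⟩
        rw [hne] at this; exact this)
    rcases h2 with h | h
    · exact hx (interior_subset (h (left_mem_segment ℝ x v)))
    · exact (interior_subset (h (right_mem_segment ℝ x v))) hv
  obtain ⟨y, hy, hyA⟩ := h1
  have hxy : dist x y ≤ dist x v := by
    have := dist_add_dist_of_mem_segment hy
    have := dist_nonneg (x := y) (y := v)
    linarith
  have hvy : dist v y ≤ dist x v := by
    have := dist_add_dist_of_mem_segment hy
    have := dist_nonneg (x := x) (y := y)
    rw [dist_comm v y]
    linarith
  constructor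
  · rw [Metric.mem_thickening_iff]; exact ⟨y, hyA, hxy.trans_lt hd⟩
  · rw [Metric.mem_thickening_iff]; exact ⟨y, hyA, hvy.trans_lt hd⟩

end EK

namespace EK
open scoped Pointwise
theorem lattice_count {E : Type*} [NormedAddCommGroup E] [NormedSpace ℝ E] [FiniteDimensional ℝ E]
    [MeasurableSpace E] [BorelSpace E] (μ : Measure E) [μ.IsAddHaarMeasure]
    {ι : Type*} [Fintype ι] (b : Module.Basis ι ℝ E) (S : Set E) (hSb : Bornology.IsBounded S)
    (hSm : MeasurableSet S) (C : ℝ) (hC0 : 0 ≤ C)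
    (hC : ∀ ε : ℝ, 0 < ε → ε ≤ 1 →
      μ (Metric.thickening ε (frontier S)) ≤ ENNReal.ofReal (C * ε)) :
    ∃ C' V t0 : ℝ, ∀ t : ℝ, t0 ≤ t →
      |(Nat.card ↥(t • S ∩ (Submodule.span ℤ (Set.range b) : Set E)) : ℝ) -
        V * t ^ Module.finrank ℝ E| ≤ C' * (t ^ Module.finrank ℝ E / t) := by
  classical
  set n := Module.finrank ℝ E with hn
  set D := ZSpan.fundamentalDomain b with hD
  have hDb : Bornology.IsBounded D := ZSpan.fundamentalDomain_isBounded b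
  have hDm : MeasurableSet D := ZSpan.fundamentalDomain_measurableSet b
  have hDfin : μ D ≠ ⊤ := hDb.measure_lt_top.ne
  have hDne : μ D ≠ 0 := ZSpan.measure_fundamentalDomain_ne_zero b
  obtain ⟨d, hd1, hd⟩ : ∃ d : ℝ, 0 < d ∧ ∀ x ∈ D, ‖x‖ < d := by
    obtain ⟨d, hd0, hd⟩ := hDb.exists_pos_norm_le
    exact ⟨d + 1, by linarith, fun x hx => by linarith [hd x hx]⟩
  have hDr : 0 < μ.real D := by
    rw [measureReal_def]; exact ENNReal.toReal_pos hDne hDfin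
  refine ⟨C * d / μ.real D, μ.real S / μ.real D, max d 1, fun t ht => ?_⟩
  have htd : d ≤ t := (le_max_left _ _).trans ht
  have ht1 : 1 ≤ t := (le_max_right _ _).trans ht
  have ht0 : 0 < t := by linarith
  set A := t • S with hA
  have hAb : Bornology.IsBounded A := hSb.smul₀ t
  have hAm : MeasurableSet A := hSm.const_smul₀ t
  set Λ : Set E := (Submodule.span ℤ (Set.range b) : Set E) with hΛ
  have hfin : (A ∩ Λ).Finite := by
    exact ZSpan.setFinite_inter b hAb
  set F := hfin.toFinset with hF
  have hFcard : Nat.card ↥(A ∩ Λ) = F.card := by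
    rw [Nat.card_coe_set_eq, Set.ncard_eq_toFinset_card _ hfin]
  set U : Set E := ⋃ v ∈ F, (v +ᵥ D) with hU
  have hUm : MeasurableSet U := Finset.measurableSet_biUnion _ fun v _ => hDm.const_vadd v
  have hUμ : μ.real U = F.card * μ.real D := by
    rw [hU, measureReal_biUnion_finset (h := fun v _ => by rw [measure_vadd]; exact hDfin)]
    · rw [Finset.sum_congr rfl (g := fun _ => μ.real D), Finset.sum_const, nsmul_eq_mul]
      intro v _
      simp [measureReal_def, measure_vadd]
    · intro v hv w hw hvw
      rw [Function.onFun, Set.disjoint_left]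
      rintro x hx hx'
      apply hvw
      have hvΛ : v ∈ Λ := ((Set.Finite.mem_toFinset hfin).mp hv).2
      have hwΛ : w ∈ Λ := ((Set.Finite.mem_toFinset hfin).mp hw).2
      obtain ⟨y, _, hyu⟩ := ZSpan.exist_unique_vadd_mem_fundamentalDomain b x
      have h1 := hyu ⟨-v, Submodule.neg_mem _ hvΛ⟩ (by
        rw [Set.mem_vadd_set_iff_neg_vadd_mem] at hx; exact hx)
      have h2 := hyu ⟨-w, Submodule.neg_mem _ hwΛ⟩ (by
        rw [Set.mem_vadd_set_iff_neg_vadd_mem] at hx'; exact hx')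
      have := congrArg Subtype.val (h1.trans h2.symm)
      simpa using this
    · intro v _; exact hDm.const_vadd v
  have hUfin : μ U ≠ ⊤ := by
    refine ((measure_biUnion_finset_le F _).trans_lt ?_).ne
    refine ENNReal.sum_lt_top.mpr fun v _ => ?_
    rw [measure_vadd]; exact hDfin.lt_top
  have hAfin : μ A ≠ ⊤ := hAb.measure_lt_top.ne
  set T := Metric.thickening d (frontier A) with hT
  have hUA : U \ A ⊆ T := by
    rintro x ⟨hxU, hxA⟩
    obtain ⟨v, hv, hx⟩ := Set.mem_iUnion₂.mp hxU
    obtain ⟨q, hq, rfl⟩ := hx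
    have hvA : v ∈ A := ((Set.Finite.mem_toFinset hfin).mp hv).1
    exact (mem_cthick_frontier hxA hvA (by simpa using hd q hq)).1
  have hAU : A \ U ⊆ T := by
    rintro x ⟨hxA, hxU⟩
    obtain ⟨y, hy, _⟩ := ZSpan.exist_unique_vadd_mem_fundamentalDomain b x
    have hyx : (y : E) + x ∈ D := hy
    have hvA : -(y:E) ∉ A := by
      intro hcon
      apply hxU
      refine Set.mem_iUnion₂.mpr ⟨-(y:E), ?_, ?_⟩
      · exact (Set.Finite.mem_toFinset hfin).mpr ⟨hcon, Submodule.neg_mem _ y.2⟩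
      · rw [Set.mem_vadd_set_iff_neg_vadd_mem]; simpa using hyx
    refine (mem_cthick_frontier hvA hxA ?_).2
    rw [dist_comm, dist_eq_norm]
    have := hd _ hyx
    rwa [sub_neg_eq_add, add_comm]
  have hTμ : μ T ≤ ENNReal.ofReal (C * d * (t ^ n / t)) := by
    have h1 : T = t • Metric.thickening (d / t) (frontier S) := by
      ext x
      rw [Set.mem_smul_set_iff_inv_smul_mem₀ ht0.ne', hT, Metric.mem_thickening_iff,
        Metric.mem_thickening_iff]
      have hfr : frontier A = t • frontier S := by
        have := (Homeomorph.smulOfNeZero t ht0.ne' (α := E)).image_frontier S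
        exact this.symm
      rw [hfr]
      constructor
      · rintro ⟨_, ⟨z, hz, rfl⟩, hlt⟩
        refine ⟨z, hz, ?_⟩
        rw [lt_div_iff₀ ht0]
        have : dist x (t • z) = t * dist (t⁻¹ • x) z := by
          conv_lhs => rw [← smul_inv_smul₀ ht0.ne' x]
          rw [dist_smul₀, Real.norm_of_nonneg ht0.le]
        simp only at hlt
        rw [this] at hlt
        linarith
      · rintro ⟨z, hz, hlt⟩
        refine ⟨t • z, ⟨z, hz, rfl⟩, ?_⟩
        rw [lt_div_iff₀ ht0] at hlt
        have : dist x (t • z) = t * dist (t⁻¹ • x) z := by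
          conv_lhs => rw [← smul_inv_smul₀ ht0.ne' x]
          rw [dist_smul₀, Real.norm_of_nonneg ht0.le]
        rw [this]
        linarith
    rw [h1, Measure.addHaar_smul]
    calc _ ≤ ENNReal.ofReal |t ^ Module.finrank ℝ E| * ENNReal.ofReal (C * (d/t)) := by
          gcongr
          exact hC _ (by positivity) (by rw [div_le_one ht0]; exact htd)
      _ = _ := by
          rw [← ENNReal.ofReal_mul (by positivity), abs_of_pos (by positivity)]
          congr 1
          rw [← hn]
          ring
  have hTfin : μ T ≠ ⊤ := (hTμ.trans_lt ENNReal.ofReal_lt_top).ne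
  have hTr : μ.real T ≤ C * d * (t ^ n / t) := by
    rw [measureReal_def]
    exact ENNReal.toReal_le_of_le_ofReal (by positivity) hTμ
  have hAr : μ.real A = μ.real S * t ^ n := by
    rw [measureReal_def, hA, Measure.addHaar_smul, ENNReal.toReal_mul, ENNReal.toReal_ofReal
      (abs_nonneg _), abs_of_pos (by positivity), measureReal_def, mul_comm]
  have e1 : μ.real U ≤ μ.real A + μ.real T := by
    have : U ⊆ A ∪ T := fun x hx => by
      by_cases h : x ∈ A
      · exact Or.inl h
      · exact Or.inr (hUA ⟨hx, h⟩)
    refine (measureReal_mono this ?_).trans (measureReal_union_le _ _)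
    exact (measure_union_lt_top hAfin.lt_top hTfin.lt_top).ne
  have e2 : μ.real A ≤ μ.real U + μ.real T := by
    have : A ⊆ U ∪ T := fun x hx => by
      by_cases h : x ∈ U
      · exact Or.inl h
      · exact Or.inr (hAU ⟨hx, h⟩)
    refine (measureReal_mono this ?_).trans (measureReal_union_le _ _)
    exact (measure_union_lt_top hUfin.lt_top hTfin.lt_top).ne
  rw [hFcard]
  have key : |(F.card : ℝ) * μ.real D - μ.real S * t ^ n| ≤ C * d * (t^n/t) := by
    rw [abs_le]; constructor <;> linarith
  have : (F.card : ℝ) - μ.real S / μ.real D * t ^ n =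
      ((F.card : ℝ) * μ.real D - μ.real S * t ^ n) / μ.real D := by
    field_simp
  rw [this, abs_div, abs_of_pos hDr, div_le_iff₀ hDr]
  refine key.trans (le_of_eq ?_)
  field_simp

end EK

namespace EK
open scoped Pointwise
open NumberField NumberField.mixedEmbedding NumberField.mixedEmbedding.fundamentalCone
  NumberField.InfinitePlace NumberField.Units NumberField.Units.dirichletUnitTheorem


/-- radial part of the parametrisation -/
def gPar (c : realSpace K) : realSpace K :=
  open scoped Classical in c w₀ • expMapBasis (fun i ↦ if i = w₀ then 0 else c i)

/-- Parametrisation of closure of normLeOne -/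
def fPar (σ : {w : InfinitePlace K // IsReal w} → Bool)
    (q : (InfinitePlace K ⊕ {w : InfinitePlace K // IsComplex w}) → ℝ) : mixedSpace K :=
  (fun w => (if σ w then 1 else -1) * gPar K (fun i => q (Sum.inl i)) w.1,
   fun w => (gPar K (fun i => q (Sum.inl i)) w.1 : ℂ) *
      Complex.exp (2 * Real.pi * q (Sum.inr w) * Complex.I))

theorem contDiff_gPar : ContDiff ℝ 1 (gPar K) := by
  classical
  unfold gPar
  rw [contDiff_pi]
  intro w
  simp only [Pi.smul_apply, smul_eq_mul, expMapBasis_apply, expMap_apply]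
  refine ContDiff.mul (contDiff_apply _ _ _) (Real.contDiff_exp.comp ?_)
  refine ContDiff.mul contDiff_const ?_
  have h1 : ContDiff ℝ 1 (fun x : realSpace K => (completeBasis K).equivFun.symm x) :=
    (completeBasis K).equivFun.symm.toLinearMap.toContinuousLinearMap.contDiff
  have h2 : ContDiff ℝ 1 (fun x : realSpace K => (fun i ↦ if i = w₀ then 0 else x i : realSpace K)) := by
    rw [contDiff_pi]
    intro i
    split_ifs
    · exact contDiff_const
    · exact contDiff_apply _ _ _
  exact (contDiff_apply ℝ ℝ w).comp (h1.comp h2)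

open scoped Classical in
theorem contDiff_fPar (σ) : ContDiff ℝ 1 (fPar K σ) := by
  have h0 : ContDiff ℝ 1 (fun q : (InfinitePlace K ⊕ {w : InfinitePlace K // IsComplex w}) → ℝ =>
      gPar K (fun i => q (Sum.inl i))) := by
    refine (contDiff_gPar K).comp ?_
    rw [contDiff_pi]
    exact fun i => contDiff_apply _ _ _
  rw [contDiff_pi] at h0
  unfold fPar
  refine ContDiff.prodMk ?_ ?_
  · rw [contDiff_pi]
    exact fun w => contDiff_const.mul (h0 _)
  · rw [contDiff_pi]
    intro w
    refine (Complex.ofRealCLM.contDiff.comp (h0 _)).mul ?_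
    refine ContDiff.cexp ?_
    refine ContDiff.mul (ContDiff.mul contDiff_const ?_) contDiff_const
    exact Complex.ofRealCLM.contDiff.comp (contDiff_apply _ _ _)

theorem frontier_subset :
    frontier (normLeOne K) ⊆ ⋃ (j : ({w : InfinitePlace K // IsReal w} → Bool) × InfinitePlace K × Bool),
      fPar K j.1 '' {q | q ∈ Set.Icc 0 1 ∧ q (Sum.inl j.2.1) = if j.2.2 then 1 else 0} := by
  classical
  intro x hx
  have hxc := closure_normLeOne_subset K hx.1
  have hxi : x ∉ interior (normLeOne K) := hx.2
  obtain ⟨c, hc, _, ⟨y, hy, rfl⟩, hxy⟩ := hxc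
  have hy' : ∀ w, w ≠ w₀ → y w ∈ Set.Icc (0:ℝ) 1 := fun w hw => by
    have := hy w (Set.mem_univ _)
    simpa [hw] using this
  have hy0 : y w₀ = 0 := by
    have := hy w₀ (Set.mem_univ _)
    simpa using this
  set cc : realSpace K := fun w => if w = w₀ then c else y w with hcc
  have hg : gPar K cc = normAtAllPlaces x := by
    rw [← hxy, gPar]
    simp only [hcc, if_true]
    congr 2
    ext i
    split_ifs with h
    · rw [h, hy0]
    · rfl
  have hcc01 : ∀ w, cc w ∈ Set.Icc (0:ℝ) 1 := fun w => by
    simp only [hcc]; split_ifs with h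
    · exact hc
    · exact hy' w h
  -- bad coordinate
  have hbad : ∃ w, cc w = 0 ∨ cc w = 1 := by
    by_contra! hcon
    have hcc' : ∀ w, cc w ∈ Set.Ioo (0:ℝ) 1 := fun w =>
      ⟨lt_of_le_of_ne (hcc01 w).1 (hcon w).1.symm, lt_of_le_of_ne (hcc01 w).2 (hcon w).2⟩
    apply hxi
    apply subset_interior_normLeOne K
    refine ⟨fun w => if w = w₀ then Real.log c else y w, ?_, ?_⟩
    · rw [interior_paramSet, Set.mem_univ_pi]
      have hc0 := hcc' w₀
      simp only [hcc, if_true] at hc0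
      intro w
      split_ifs with h
      · exact Real.log_neg hc0.1 hc0.2
      · have := hcc' w
        simpa [hcc, h] using this
    · have hc0 := hcc' w₀
      simp only [hcc, if_true] at hc0
      rw [← hxy, expMapBasis_apply'', if_pos rfl, Real.exp_log hc0.1]
      simp only
      congr 2
      ext i
      split_ifs with h
      · rw [h, hy0]
      · rfl
  obtain ⟨w1, hw1⟩ := hbad
  set θ : {w : InfinitePlace K // IsComplex w} → ℝ := fun w => toIcoMod (zero_lt_one) 0
    ((x.2 w).arg / (2 * Real.pi)) with hθ
  set q : (InfinitePlace K ⊕ {w : InfinitePlace K // IsComplex w}) → ℝ := Sum.elim cc θ with hq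
  refine Set.mem_iUnion.mpr ⟨(fun w => decide (0 ≤ x.1 w), w1, decide (cc w1 = 1)), q, ⟨?_, ?_⟩, ?_⟩
  · constructor
    · rintro (w | w)
      · exact (hcc01 w).1
      · exact (toIcoMod_mem_Ico zero_lt_one 0 _).1
    · rintro (w | w)
      · exact (hcc01 w).2
      · have := (toIcoMod_mem_Ico zero_lt_one 0 ((x.2 w).arg / (2 * Real.pi))).2
        simp only [zero_add] at this
        exact this.le
  · simp only [hq, Sum.elim_inl, decide_eq_true_eq]
    split_ifs with h
    · exact h
    · exact hw1.resolve_right h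
  · unfold fPar
    simp only [hq, Sum.elim_inl, Sum.elim_inr]
    have hg' : gPar K (fun i => cc i) = normAtAllPlaces x := hg
    rw [hg']
    refine Prod.ext ?_ ?_
    · funext w
      simp only [normAtAllPlaces_apply, normAtPlace_apply_of_isReal w.2, decide_eq_true_eq]
      have : (⟨w.1, w.2⟩ : {w : InfinitePlace K // IsReal w}) = w := rfl
      rw [Real.norm_eq_abs]
      split_ifs with h
      · rw [one_mul, abs_of_nonneg h]
      · rw [abs_of_neg (not_le.mp h)]; ring
    · funext w
      simp only [normAtAllPlaces_apply, normAtPlace_apply_of_isComplex w.2]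
      have h1 : Complex.exp (2 * Real.pi * (θ w : ℂ) * Complex.I) =
          Complex.exp ((x.2 w).arg * Complex.I) := by
        rw [Complex.exp_eq_exp_iff_exists_int]
        refine ⟨- toIcoDiv (zero_lt_one) 0 ((x.2 w).arg / (2 * Real.pi)), ?_⟩
        have : θ w = (x.2 w).arg / (2 * Real.pi) -
          toIcoDiv (zero_lt_one) 0 ((x.2 w).arg / (2 * Real.pi)) • (1:ℝ) := rfl
        rw [this]
        have hpi : (Real.pi : ℂ) ≠ 0 := by exact_mod_cast Real.pi_ne_zero
        push_cast
        simp only [zsmul_eq_mul, mul_one]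
        push_cast
        field_simp
        ring
      rw [h1]
      exact Complex.norm_mul_exp_arg_mul_I _


theorem thick_iUnion {E J : Type*} [Fintype J] [PseudoEMetricSpace E] [MeasurableSpace E] (μ : Measure E)
    (F : Set E) (A : J → Set E) (hF : F ⊆ ⋃ j, A j)
    (h : ∀ j, ∃ C : ℝ, 0 ≤ C ∧ ∀ ε : ℝ, 0 < ε → ε ≤ 1 →
      μ (Metric.thickening ε (A j)) ≤ ENNReal.ofReal (C * ε)) :
    ∃ C : ℝ, 0 ≤ C ∧ ∀ ε : ℝ, 0 < ε → ε ≤ 1 →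
      μ (Metric.thickening ε F) ≤ ENNReal.ofReal (C * ε) := by
  choose C hC0 hC using h
  refine ⟨∑ j, C j, Finset.sum_nonneg fun j _ => hC0 j, fun ε hε hε1 => ?_⟩
  calc _ ≤ μ (⋃ j, Metric.thickening ε (A j)) := by
        rw [← Metric.thickening_iUnion]
        exact measure_mono (Metric.thickening_subset_of_subset _ hF)
    _ ≤ ∑ j, μ (Metric.thickening ε (A j)) :=
        measure_iUnion_fintype_le _ _
    _ ≤ ∑ j, ENNReal.ofReal (C j * ε) := Finset.sum_le_sum fun j _ => hC j ε hε hε1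
    _ = _ := by
        rw [Finset.sum_mul, ENNReal.ofReal_sum_of_nonneg]
        exact fun j _ => mul_nonneg (hC0 j) hε.le

open scoped Classical in
theorem card_par : Fintype.card (InfinitePlace K ⊕ {w : InfinitePlace K // IsComplex w}) =
      Module.finrank ℝ (mixedSpace K) := by
  rw [mixedEmbedding.finrank, Fintype.card_sum, ← card_add_two_mul_card_eq_rank,
    card_eq_nrRealPlaces_add_nrComplexPlaces]
  have : Fintype.card {w : InfinitePlace K // IsComplex w} = nrComplexPlaces K := by
    unfold nrComplexPlaces
    convert rfl
  rw [this]; ring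

open scoped Classical in
theorem thick_normLeOne : ∃ C : ℝ, 0 ≤ C ∧ ∀ ε : ℝ, 0 < ε → ε ≤ 1 →
      volume (Metric.thickening ε (frontier (normLeOne K))) ≤ ENNReal.ofReal (C * ε) := by
  have hlip : ∀ σ, ∃ L : NNReal, LipschitzOnWith L (fPar K σ) (Set.Icc 0 1) := fun σ =>
    ((contDiff_fPar K σ).locallyLipschitz.locallyLipschitzOn).exists_lipschitzOnWith_of_compact
      isCompact_Icc
  refine thick_iUnion _ _ _ (frontier_subset K) ?_
  intro j
  obtain ⟨L, hL⟩ := hlip j.1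
  exact thick_face (volume : Measure (mixedSpace K)) (card_par K) (fPar K j.1) L hL
      (Sum.inl j.2.1) (if j.2.2 then 1 else 0)

end EK

namespace EK
open scoped Pointwise
open NumberField NumberField.mixedEmbedding NumberField.mixedEmbedding.fundamentalCone
  NumberField.InfinitePlace NumberField.Units Ideal Submodule
open scoped nonZeroDivisors


theorem card_class_eq {C : ClassGroup (𝓞 K)} {J : (Ideal (𝓞 K))⁰} {s : ℝ} (hJ : ClassGroup.mk0 J = C⁻¹) :
    Nat.card {I : (Ideal (𝓞 K))⁰ // absNorm (I : Ideal (𝓞 K)) ≤ s ∧ ClassGroup.mk0 I = C}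
      = Nat.card {I : (Ideal (𝓞 K))⁰ // (J : Ideal (𝓞 K)) ∣ I ∧ IsPrincipal (I : Ideal (𝓞 K)) ∧
        absNorm (I : Ideal (𝓞 K)) ≤ s * absNorm (J : Ideal (𝓞 K))} := by
  simp_rw [← nonZeroDivisors_dvd_iff_dvd_coe]
  refine Nat.card_congr ?_
  refine ((Equiv.dvd J).subtypeEquiv fun I ↦ ?_).trans
    (Equiv.subtypeSubtypeEquivSubtypeInter (fun I : (Ideal (𝓞 K))⁰ ↦ J ∣ I) _)
  rw [← ClassGroup.mk0_eq_one_iff (SetLike.coe_mem _)]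
  simp_rw [Equiv.dvd_apply, Submonoid.coe_mul, ← Submonoid.mul_def, _root_.map_mul, hJ,
    inv_mul_eq_one, Nat.cast_mul, mul_comm s, eq_comm, and_comm, and_congr_left_iff]
  exact fun _ ↦
    (mul_le_mul_iff_of_pos_left (Nat.cast_pos.mpr (absNorm_pos_of_nonZeroDivisors J))).symm

theorem smul_normLeOne (t : ℝ) (ht : 0 < t) :
    t • normLeOne K = {x | x ∈ fundamentalCone K ∧ mixedEmbedding.norm x ≤ t ^ Module.finrank ℚ K} := by
  ext x
  rw [Set.mem_smul_set_iff_inv_smul_mem₀ ht.ne']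
  have h2 : normLeOne K = {x | x ∈ fundamentalCone K ∧ mixedEmbedding.norm x ≤ 1} := by ext; simp
  rw [h2]
  simp only [Set.mem_setOf_eq]
  rw [smul_mem_iff_mem (inv_ne_zero ht.ne'), mixedEmbedding.norm_smul, abs_of_pos (inv_pos.mpr ht),
    inv_pow, inv_mul_le_iff₀ (by positivity), mul_one]

theorem card_lattice_eq (J : (Ideal (𝓞 K))⁰) (t s : ℝ) (ht : 0 < t) (hts : t ^ Module.finrank ℚ K = s) :
    Nat.card ↥(t • normLeOne K ∩ (idealLattice K ((FractionalIdeal.mk0 K) J) : Set (mixedSpace K)))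
      = Nat.card {a : idealSet K J // mixedEmbedding.norm (a : mixedSpace K) ≤ s} := by
  rw [smul_normLeOne K t ht, hts]
  refine Nat.card_congr ((Equiv.subtypeEquivProp ?_).trans
    (Equiv.subtypeSubtypeEquivSubtypeInter _ (mixedEmbedding.norm · ≤ s)).symm)
  ext
  simp_rw [mem_idealSet, Set.mem_inter_iff, SetLike.mem_coe,
    mem_idealLattice, FractionalIdeal.coe_mk0]
  constructor
  · rintro ⟨⟨hx₁, hx₂⟩, _, ⟨x, hx₃, rfl⟩, h⟩
    exact ⟨⟨hx₁, x, hx₃, h⟩, hx₂⟩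
  · rintro ⟨⟨hx₁, ⟨x, hx₂, rfl⟩⟩, hx₃⟩
    exact ⟨⟨hx₁, hx₃⟩, ⟨(x : K), by simp [hx₂], rfl⟩⟩

open scoped Classical in
theorem lattice_ideal (J : (Ideal (𝓞 K))⁰) : ∃ C' V t0 : ℝ, ∀ t : ℝ, t0 ≤ t →
      |(Nat.card ↥(t • normLeOne K ∩ (idealLattice K ((FractionalIdeal.mk0 K) J) : Set (mixedSpace K))) : ℝ) -
        V * t ^ Module.finrank ℚ K| ≤ C' * (t ^ Module.finrank ℚ K / t) := by
  obtain ⟨C, hC0, hC⟩ := thick_normLeOne K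
  have := lattice_count (volume : Measure (mixedSpace K))
    ((Module.Free.chooseBasis ℤ (idealLattice K ((FractionalIdeal.mk0 K) J))).ofZLatticeBasis ℝ _)
    (normLeOne K) (isBounded_normLeOne K) (measurableSet_normLeOne K) C hC0 hC
  rw [Module.Basis.ofZLatticeBasis_span, mixedEmbedding.finrank] at this
  exact this

theorem class_count (C : ClassGroup (𝓞 K)) : ∃ C' V s0 : ℝ, ∀ s : ℝ, s0 ≤ s →
    |(Nat.card {I : (Ideal (𝓞 K))⁰ // absNorm (I : Ideal (𝓞 K)) ≤ s ∧ ClassGroup.mk0 I = C} : ℝ)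
      - V * s| ≤ C' * s ^ (1 - 1 / (Module.finrank ℚ K : ℝ)) := by
  obtain ⟨J, hJ⟩ := ClassGroup.mk0_surjective C⁻¹
  have h₃ : 0 < (absNorm J.1 : ℝ) := (Nat.cast_pos.mpr (absNorm_pos_of_nonZeroDivisors J))
  set n := Module.finrank ℚ K with hn
  have hn0 : 0 < n := Module.finrank_pos
  set w : ℝ := (torsionOrder K : ℝ) with hw
  have hw0 : 0 < w := by
    rw [hw]; exact_mod_cast Nat.pos_of_ne_zero (torsionOrder_ne_zero K)
  set A : ℝ := (absNorm J.1 : ℝ) with hA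
  obtain ⟨C', V, t0, h⟩ := lattice_ideal K J
  refine ⟨C' * A ^ (1 - 1 / (n:ℝ)) / w, V * A / w, max 1 ((max t0 0) ^ n / A), fun s hs => ?_⟩
  have hs1 : 1 ≤ s := le_trans (le_max_left _ _) hs
  have hs0 : 0 < s := by linarith
  have hs2 : (max t0 0) ^ n ≤ s * A := (div_le_iff₀ h₃).mp (le_trans (le_max_right _ _) hs)
  set t := (s * A) ^ (1 / (n:ℝ)) with ht
  have htn : t ^ n = s * A := by
    rw [ht, one_div]; exact Real.rpow_inv_natCast_pow (by positivity) hn0.ne'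
  have ht0 : 0 < t := by rw [ht]; positivity
  have htt : t0 ≤ t := by
    refine le_trans (le_max_left t0 0) ?_
    exact le_of_pow_le_pow_left₀ hn0.ne' ht0.le (htn ▸ hs2)
  have h1 := h t htt
  rw [card_lattice_eq K J t (s*A) ht0 htn, htn, ← card_isPrincipal_dvd_norm_le] at h1
  rw [card_class_eq K hJ]
  push_cast at h1
  have h2 : s * A / t = A ^ (1 - 1/(n:ℝ)) * s ^ (1 - 1/(n:ℝ)) := by
    rw [ht, ← Real.mul_rpow h₃.le hs0.le, mul_comm A s, Real.rpow_sub (by positivity), Real.rpow_one]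
  rw [h2] at h1
  generalize hX : (Nat.card {I : (Ideal (𝓞 K))⁰ // (J : Ideal (𝓞 K)) ∣ I ∧ IsPrincipal (I : Ideal (𝓞 K)) ∧
        absNorm (I : Ideal (𝓞 K)) ≤ s * absNorm (J : Ideal (𝓞 K))} : ℝ) = X at h1 ⊢
  have h3 : X - V * A / w * s = (X * w - V * (s * A)) / w := by field_simp
  rw [h3, abs_div, abs_of_pos hw0, div_mul_eq_mul_div]
  gcongr
  linarith [h1]

end EK

namespace EK
open scoped Pointwise
open NumberField NumberField.InfinitePlace NumberField.Units Ideal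
open scoped nonZeroDivisors


theorem finite_ideals (x : ℝ) : {m : Ideal (𝓞 K) | m ≠ 0 ∧ (absNorm m : ℝ) ≤ x}.Finite := by
  refine (Ideal.finite_setOfPred_absNorm_le (S := 𝓞 K) ⌊x⌋₊).subset ?_
  intro m hm
  exact Nat.le_floor hm.2

/-- nonzero ideals of norm ≤ x -/
def ideals (x : ℝ) : Finset (Ideal (𝓞 K)) := (finite_ideals K x).toFinset

variable {K} in
theorem mem_ideals {x : ℝ} {m : Ideal (𝓞 K)} : m ∈ ideals K x ↔ m ≠ 0 ∧ (absNorm m : ℝ) ≤ x := by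
  simp [ideals]

variable {K} in
theorem norm_ge_one {m : Ideal (𝓞 K)} (hm : m ≠ 0) : (1:ℝ) ≤ absNorm m := by
  have : absNorm m ≠ 0 := by rwa [Ne, Ideal.absNorm_eq_zero_iff]
  exact_mod_cast Nat.one_le_iff_ne_zero.mpr this

theorem card_ideals (x : ℝ) : (ideals K x).card =
    Nat.card {I : (Ideal (𝓞 K))⁰ // absNorm (I : Ideal (𝓞 K)) ≤ x} := by
  have h1 : (ideals K x).card = Nat.card {m : Ideal (𝓞 K) // m ≠ 0 ∧ (absNorm m : ℝ) ≤ x} := by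
    rw [ideals, ← Set.ncard_eq_toFinset_card _ (finite_ideals K x)]
    rfl
  rw [h1]
  refine Nat.card_congr ?_
  refine ⟨fun m => ⟨⟨m.1, mem_nonZeroDivisors_of_ne_zero m.2.1⟩, m.2.2⟩,
    fun I => ⟨I.1.1, nonZeroDivisors.ne_zero I.1.2, I.2⟩, fun _ => rfl, fun _ => rfl⟩

theorem card_ideals_sum (x : ℝ) : ((ideals K x).card : ℝ) = ∑ C : ClassGroup (𝓞 K),
    (Nat.card {I : (Ideal (𝓞 K))⁰ // absNorm (I : Ideal (𝓞 K)) ≤ x ∧ ClassGroup.mk0 I = C} : ℝ) := by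
  classical
  rw [card_ideals]
  have : Finite {I : (Ideal (𝓞 K))⁰ // absNorm (I : Ideal (𝓞 K)) ≤ x} := by
    refine (Ideal.finite_setOfPred_absNorm_le₀ (S := 𝓞 K) ⌊x⌋₊).subset ?_
    intro m hm
    exact Nat.le_floor hm
  have : Fintype {I : (Ideal (𝓞 K))⁰ // absNorm (I : Ideal (𝓞 K)) ≤ x} := Fintype.ofFinite _
  let e := fun C : ClassGroup (𝓞 K) ↦ Equiv.subtypeSubtypeEquivSubtypeInter
      (fun I : (Ideal (𝓞 K))⁰ ↦ (absNorm I.1 : ℝ) ≤ x) (fun I ↦ ClassGroup.mk0 I = C)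
  simp_rw [← Nat.card_congr (e _), Nat.card_eq_fintype_card, Fintype.subtype_card]
  rw [Fintype.card, Finset.card_eq_sum_card_fiberwise (f := fun I ↦ ClassGroup.mk0 I.1)
      (t := Finset.univ) (fun _ _ ↦ Finset.mem_univ _), Nat.cast_sum]

theorem count_main : ∃ κ C c0 : ℝ, 0 < κ ∧ 0 ≤ C ∧ 0 < c0 ∧ c0 ≤ 1/4 ∧ ∀ y c : ℝ, 0 < y → 0 ≤ c → c ≤ c0 →
    |((ideals K y).card : ℝ) - κ * y| ≤ C * y ^ (1 - c) := by
  choose C V s0 h using class_count K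
  set n := Module.finrank ℚ K with hn
  have hn0 : (0:ℝ) < n := by rw [hn]; exact_mod_cast Module.finrank_pos
  obtain ⟨S, hS⟩ : ∃ S : ℝ, ∀ D, s0 D ≤ S :=
    ⟨∑ D, |s0 D|, fun D => (le_abs_self _).trans
      (Finset.single_le_sum (f := fun D => |s0 D|) (fun _ _ => abs_nonneg _) (Finset.mem_univ D))⟩
  set κ := ∑ D, V D with hκ
  set CC := ∑ D, |C D| with hCC
  have hCC0 : 0 ≤ CC := Finset.sum_nonneg fun _ _ => abs_nonneg _
  have hmain : ∀ s, S ≤ s → 0 < s → |((ideals K s).card : ℝ) - κ * s| ≤ CC * s ^ (1 - 1 / (n:ℝ)) := by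
    intro s hs hs0
    rw [card_ideals_sum, hκ, hCC, Finset.sum_mul, ← Finset.sum_sub_distrib, Finset.sum_mul]
    refine (Finset.abs_sum_le_sum_abs _ _).trans (Finset.sum_le_sum fun D _ => ?_)
    refine (h D s ((hS D).trans hs)).trans ?_
    gcongr
    exact le_abs_self _
  have hlim : Tendsto (fun s : ℝ => ((ideals K s).card : ℝ) / s) atTop (𝓝 κ) := by
    have h1 : Tendsto (fun s : ℝ => CC * s ^ (-(1 / (n:ℝ)))) atTop (𝓝 0) := by
      simpa using (tendsto_rpow_neg_atTop (y := 1/(n:ℝ)) (by positivity)).const_mul CC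
    rw [tendsto_iff_norm_sub_tendsto_zero]
    refine squeeze_zero' (Eventually.of_forall fun _ => norm_nonneg _) ?_ h1
    filter_upwards [eventually_ge_atTop S, eventually_gt_atTop 0] with s hs hs0
    have := hmain s hs hs0
    rw [Real.norm_eq_abs, show ((ideals K s).card : ℝ) / s - κ = (((ideals K s).card : ℝ) - κ * s) / s by
      field_simp, abs_div, abs_of_pos hs0, div_le_iff₀ hs0]
    refine this.trans (le_of_eq ?_)
    rw [mul_assoc, sub_eq_add_neg, add_comm, Real.rpow_add hs0, Real.rpow_one]
  have hκ0 : 0 < κ := by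
    have h2 := Ideal.tendsto_norm_le_div_atTop₀ K
    simp_rw [← card_ideals] at h2
    rw [tendsto_nhds_unique hlim h2]
    have h3 := regulator_pos K
    have h4 : 0 < classNumber K := classNumber_pos K
    have h5 : 0 < torsionOrder K := Nat.pos_of_ne_zero (torsionOrder_ne_zero K)
    have h6 : 0 < |discr K| := abs_pos.mpr (discr_ne_zero K)
    have h6 : (0:ℝ) < |(discr K : ℝ)| := by exact_mod_cast h6
    positivity
  set S1 := max S 1 with hS1
  refine ⟨κ, max CC (max κ (((ideals K S1).card : ℝ) + κ * S1)), min (1/4) (1/(n:ℝ)), hκ0,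
    le_trans hCC0 (le_max_left _ _), by positivity, min_le_left _ _, fun y c hy hc hc0 => ?_⟩
  rcases lt_or_ge y 1 with hy1 | hy1
  · have h0 : (ideals K y).card = 0 := by
      rw [Finset.card_eq_zero, Finset.eq_empty_iff_forall_notMem]
      intro m hm
      rw [mem_ideals] at hm
      linarith [norm_ge_one hm.1, hm.2]
    rw [h0, Nat.cast_zero, zero_sub, abs_neg, abs_of_pos (by positivity)]
    have h1 : y ≤ y ^ (1 - c) := by
      conv_lhs => rw [← Real.rpow_one y]
      exact Real.rpow_le_rpow_of_exponent_ge hy hy1.le (by linarith)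
    have h2 : κ ≤ max CC (max κ (((ideals K S1).card : ℝ) + κ * S1)) :=
      (le_max_left _ _).trans (le_max_right _ _)
    exact mul_le_mul h2 h1 hy.le (hκ0.le.trans h2)
  · have hc1 : c ≤ 1/4 := hc0.trans (min_le_left _ _)
    have hcn : c ≤ 1/(n:ℝ) := hc0.trans (min_le_right _ _)
    rcases le_or_gt S1 y with hyS | hyS
    · refine (hmain y ((le_max_left _ _).trans hyS) hy).trans ?_
      refine mul_le_mul (le_max_left _ _) ?_ (by positivity) (le_trans hCC0 (le_max_left _ _))
      exact Real.rpow_le_rpow_of_exponent_le hy1 (by linarith)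
    · have h1 : 1 ≤ y ^ (1 - c) := Real.one_le_rpow hy1 (by linarith)
      have h2 : (ideals K y).card ≤ (ideals K S1).card := by
        refine Finset.card_le_card fun m hm => ?_
        rw [mem_ideals] at hm ⊢
        exact ⟨hm.1, hm.2.trans hyS.le⟩
      have h2' : ((ideals K y).card : ℝ) ≤ (ideals K S1).card := by exact_mod_cast h2
      have h3 : (((ideals K S1).card : ℝ) + κ * S1) ≤ max CC (max κ (((ideals K S1).card : ℝ) + κ * S1)) :=
        (le_max_right _ _).trans (le_max_right _ _)
      have h4 : κ * y ≤ κ * S1 := by gcongr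
      have h5 : 0 ≤ κ * y := by positivity
      calc |((ideals K y).card : ℝ) - κ * y| ≤ ((ideals K S1).card : ℝ) + κ * S1 := by
            rw [abs_le]; constructor <;> linarith [Nat.cast_nonneg (α := ℝ) (ideals K y).card]
        _ ≤ _ := h3
        _ = _ * 1 := (mul_one _).symm
        _ ≤ _ := by
          refine mul_le_mul_of_nonneg_left h1 (le_trans hCC0 (le_max_left _ _))

end EK

namespace EK
open scoped Pointwise
open NumberField Ideal


theorem count_le : ∃ C : ℝ, 0 < C ∧ ∀ y : ℝ, 0 ≤ y → ((ideals K y).card : ℝ) ≤ C * y := by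
  obtain ⟨κ, C, c0, hκ, hC, hc0, _, h⟩ := count_main K
  refine ⟨κ + C, by positivity, fun y hy => ?_⟩
  rcases hy.eq_or_lt with rfl | hy
  · have h0 : (ideals K 0).card = 0 := by
      rw [Finset.card_eq_zero, Finset.eq_empty_iff_forall_notMem]
      intro m hm
      rw [mem_ideals] at hm
      linarith [norm_ge_one hm.1, hm.2]
    rw [h0]; simp
  have := h y 0 hy le_rfl hc0.le
  rw [sub_zero, Real.rpow_one] at this
  linarith [(abs_le.mp this).2]

theorem sum_rpow_le : ∃ C : ℝ, 0 < C ∧ ∀ s : ℝ, 1 < s → s ≤ 2 → ∀ F : Finset (Ideal (𝓞 K)),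
    (∀ m ∈ F, m ≠ 0) → ∑ m ∈ F, (absNorm m : ℝ) ^ (-s) ≤ C / (s - 1) := by
  classical
  obtain ⟨C, hC, h⟩ := count_le K
  refine ⟨4 * C, by positivity, fun s hs1 hs2 F hF => ?_⟩
  set J := F.sup (fun m => Nat.log 2 (absNorm m)) + 1 with hJ
  set r : ℝ := (1/2 : ℝ) ^ (s - 1) with hr
  have hr0 : 0 < r := by rw [hr]; positivity
  have hr1 : r ≤ 1 - (s-1)/2 := by
    have := rpow_one_add_le_one_add_mul_self (s := (-(1/2) : ℝ)) (by norm_num) (p := s - 1)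
      (by linarith) (by linarith)
    rw [hr]
    calc (1/2:ℝ)^(s-1) = (1 + (-(1/2)))^(s-1) := by norm_num
      _ ≤ _ := this
      _ = _ := by ring
  have h1 : ∀ m ∈ F, Nat.log 2 (absNorm m) ∈ Finset.range J := fun m hm => by
    rw [Finset.mem_range, hJ, Nat.lt_succ_iff]
    exact Finset.le_sup (f := fun m => Nat.log 2 (absNorm m)) hm
  rw [← Finset.sum_fiberwise_of_maps_to h1]
  have h2 : ∀ j ∈ Finset.range J, ∑ m ∈ F with Nat.log 2 (absNorm m) = j, (absNorm m : ℝ) ^ (-s)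
      ≤ 2 * C * r ^ j := by
    intro j _
    have h3 : ∀ m ∈ F.filter (fun m => Nat.log 2 (absNorm m) = j),
        (absNorm m : ℝ) ^ (-s) ≤ ((2:ℝ)^j)^(-s) := by
      intro m hm
      rw [Finset.mem_filter] at hm
      have hm0 : absNorm m ≠ 0 := by
        rw [Ne, Ideal.absNorm_eq_zero_iff]; exact hF m hm.1
      have h4 : 2 ^ j ≤ absNorm m := by rw [← hm.2]; exact Nat.pow_log_le_self 2 hm0
      have h4' : (2:ℝ)^j ≤ absNorm m := by exact_mod_cast h4
      exact Real.rpow_le_rpow_of_nonpos (by positivity) h4' (by linarith)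
    refine (Finset.sum_le_card_nsmul _ _ _ h3).trans ?_
    rw [nsmul_eq_mul]
    have h5 : (F.filter (fun m => Nat.log 2 (absNorm m) = j)).card ≤ (ideals K ((2:ℝ)^(j+1))).card := by
      refine Finset.card_le_card fun m hm => ?_
      rw [Finset.mem_filter] at hm
      rw [mem_ideals]
      refine ⟨hF m hm.1, ?_⟩
      have := Nat.lt_pow_succ_log_self (b := 2) (by norm_num) (absNorm m)
      rw [hm.2] at this
      exact_mod_cast this.le
    have h6 : ((F.filter (fun m => Nat.log 2 (absNorm m) = j)).card : ℝ) ≤ C * (2:ℝ)^(j+1) :=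
      le_trans (by exact_mod_cast h5) (h _ (by positivity))
    have h7 : ((2:ℝ)^j)^(-s) = (2^j)⁻¹ * r ^ j := by
      rw [hr, ← Real.rpow_natCast ((1/2:ℝ)^(s-1)), ← Real.rpow_mul (by norm_num), mul_comm (s-1),
        Real.rpow_mul (by norm_num), Real.rpow_natCast, one_div, inv_pow, Real.inv_rpow (by positivity),
        ← Real.rpow_neg (by positivity), ← Real.rpow_neg_one, ← Real.rpow_add (by positivity)]
      congr 1; ring
    rw [h7]
    calc _ ≤ (C * (2:ℝ)^(j+1)) * ((2^j)⁻¹ * r^j) := by gcongr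
      _ = _ := by field_simp; ring
  refine (Finset.sum_le_sum h2).trans ?_
  rw [← Finset.mul_sum]
  have hrlt : r < 1 := by linarith
  have h8 : ∑ j ∈ Finset.range J, r ^ j ≤ (1 - r)⁻¹ := by
    rw [← tsum_geometric_of_lt_one hr0.le hrlt]
    exact (summable_geometric_of_lt_one hr0.le hrlt).sum_le_tsum _ (fun _ _ => by positivity)
  have h9 : (1-r)⁻¹ ≤ 2 / (s-1) := by
    rw [inv_le_comm₀ (by linarith) (by apply div_pos <;> linarith), inv_div]
    linarith
  calc _ ≤ 2 * C * (2/(s-1)) := by gcongr; exact h8.trans h9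
    _ = _ := by ring

/-- primes of norm ≤ x -/
def primesLE (x : ℝ) : Finset (Ideal (𝓞 K)) :=
  open scoped Classical in (ideals K x).filter (fun p => Prime p)

variable {K} in
theorem mem_primesLE {x : ℝ} {p : Ideal (𝓞 K)} : p ∈ primesLE K x ↔ Prime p ∧ (absNorm p : ℝ) ≤ x := by
  simp only [primesLE, Finset.mem_filter, mem_ideals]
  exact ⟨fun h => ⟨h.2, h.1.2⟩, fun h => ⟨⟨h.1.ne_zero, h.2⟩, h.1⟩⟩

variable {K} in
theorem norm_ge_two {p : Ideal (𝓞 K)} (hp : Prime p) : (2:ℝ) ≤ absNorm p := by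
  have h1 : absNorm p ≠ 0 := by rw [Ne, Ideal.absNorm_eq_zero_iff]; exact hp.ne_zero
  have h2 : absNorm p ≠ 1 := by
    rw [Ne, Ideal.absNorm_eq_one_iff]
    intro h
    exact hp.not_isUnit (Ideal.isUnit_iff.mpr h)
  have : 2 ≤ absNorm p := by omega
  exact_mod_cast this

theorem sum_le_of_cover {α β : Type*} (F : Finset α) (G : Finset β) (g : β → α) (w : α → ℝ)
    (hw : ∀ a, 0 ≤ w a) (h : ∀ a ∈ F, ∃ b ∈ G, g b = a) : ∑ a ∈ F, w a ≤ ∑ b ∈ G, w (g b) := by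
  classical
  have h1 : F ⊆ G.image g := fun a ha => Finset.mem_image.mpr (h a ha)
  exact (Finset.sum_le_sum_of_subset_of_nonneg h1 fun _ _ _ => hw _).trans
    (Finset.sum_image_le_of_nonneg fun _ _ => hw _)

/-- Rankin-type lower bound for zeta, Euler product inequality -/
theorem euler_le (P : Finset (Ideal (𝓞 K))) : (∀ p ∈ P, Prime p) → ∀ F : Finset (Ideal (𝓞 K)),
    (∀ m ∈ F, m ≠ 0 ∧ ∀ p, Prime p → p ∣ m → p ∈ P) →
    ∑ m ∈ F, (absNorm m : ℝ)⁻¹ ≤ ∏ p ∈ P, (1 - (absNorm p : ℝ)⁻¹)⁻¹ := by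
  classical
  induction P using Finset.induction_on with
  | empty =>
    intro _ F hF
    simp only [Finset.prod_empty]
    have h1 : F ⊆ {1} := by
      intro m hm
      obtain ⟨h0, h⟩ := hF m hm
      rw [Finset.mem_singleton]
      by_contra h1
      obtain ⟨p, hp, hpm⟩ := WfDvdMonoid.exists_irreducible_factor (a := m)
        (by rwa [Ideal.isUnit_iff, ← Ideal.one_eq_top]) h0
      exact absurd (h p hp.prime hpm) (Finset.notMem_empty _)
    refine (Finset.sum_le_sum_of_subset_of_nonneg h1 fun _ _ _ => by positivity).trans ?_
    simp
  | insert p P hpP ih =>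
    intro hP F hF
    have hp : Prime p := hP p (Finset.mem_insert_self _ _)
    rw [Finset.prod_insert hpP]
    have hdec : ∀ m : Ideal (𝓞 K), ∃ kc : ℕ × Ideal (𝓞 K), m ≠ 0 → m = p ^ kc.1 * kc.2 ∧ ¬ p ∣ kc.2 := by
      intro m
      by_cases hm : m = 0
      · exact ⟨(0,0), fun h => absurd hm h⟩
      obtain ⟨c, hc⟩ := (FiniteMultiplicity.of_prime_left hp hm).exists_eq_pow_mul_and_not_dvd
      exact ⟨(_, c), fun _ => hc⟩
    choose D hD using hdec
    set F' := F.image (fun m => (D m).2) with hF'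
    set J := F.sup (fun m => (D m).1) + 1 with hJ
    have h1 : ∀ m ∈ F, ∃ q ∈ Finset.range J ×ˢ F', p ^ q.1 * q.2 = m := by
      intro m hm
      refine ⟨D m, ?_, ((hD m (hF m hm).1).1).symm⟩
      rw [Finset.mem_product, Finset.mem_range, hJ, Nat.lt_succ_iff]
      exact ⟨Finset.le_sup (f := fun m => (D m).1) hm, Finset.mem_image_of_mem _ hm⟩
    have h2 : ∑ c ∈ F', (absNorm c : ℝ)⁻¹ ≤ ∏ p ∈ P, (1 - (absNorm p : ℝ)⁻¹)⁻¹ := by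
      refine ih (fun q hq => hP q (Finset.mem_insert_of_mem hq)) F' ?_
      intro c hc
      rw [hF', Finset.mem_image] at hc
      obtain ⟨m, hm, rfl⟩ := hc
      obtain ⟨h0, h⟩ := hF m hm
      obtain ⟨h3, h4⟩ := hD m h0
      refine ⟨fun hz => ?_, fun q hq hqc => ?_⟩
      · rw [hz] at h4; exact h4 (dvd_zero p)
      · have := h q hq (by rw [h3]; exact hqc.mul_left _)
        rcases Finset.mem_insert.mp this with rfl | h5
        · exact absurd hqc h4
        · exact h5
    have hN := norm_ge_two hp
    have hN1 : (absNorm p : ℝ)⁻¹ ≤ 1/2 := by rw [one_div]; gcongr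
    have hN0 : 0 < (absNorm p : ℝ)⁻¹ := by positivity
    have h3 := sum_le_of_cover F (Finset.range J ×ˢ F') (fun q => p ^ q.1 * q.2)
      (fun m => (absNorm m : ℝ)⁻¹) (fun _ => by positivity) h1
    refine h3.trans ?_
    calc _
      _ = (∑ k ∈ Finset.range J, ((absNorm p : ℝ)⁻¹)^k) * ∑ c ∈ F', (absNorm c : ℝ)⁻¹ := by
          rw [Finset.sum_product, Finset.sum_mul_sum]
          refine Finset.sum_congr rfl fun k _ => Finset.sum_congr rfl fun c _ => ?_
          rw [_root_.map_mul, _root_.map_pow]; push_cast; rw [mul_inv, inv_pow]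
      _ ≤ (1 - (absNorm p : ℝ)⁻¹)⁻¹ * ∏ p ∈ P, (1 - (absNorm p : ℝ)⁻¹)⁻¹ := by
          refine mul_le_mul ?_ h2 (Finset.sum_nonneg fun _ _ => by positivity) (inv_nonneg.mpr (by linarith))
          rw [← tsum_geometric_of_lt_one hN0.le (by linarith)]
          exact (summable_geometric_of_lt_one hN0.le (by linarith)).sum_le_tsum _ (fun _ _ => by positivity)

end EK

namespace EK
open scoped Pointwise
open NumberField Ideal


theorem tele (a b : ℕ) (ha : 1 ≤ a) : ∑ n ∈ Finset.Ico a b, (1:ℝ) / (n * (n + 1)) ≤ 1 / a := by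
  rcases le_or_gt a b with hab | hab
  · have : ∑ n ∈ Finset.Ico a b, (1:ℝ) / (n * (n + 1)) = 1 / a - 1 / b := by
      induction b, hab using Nat.le_induction with
      | base => simp
      | succ b hab ih =>
        rw [Finset.sum_Ico_succ_top hab, ih]
        have : (0:ℝ) < b := by exact_mod_cast (by omega : 0 < b)
        push_cast
        field_simp
        ring
    rw [this]
    have : (0:ℝ) ≤ 1 / b := by positivity
    linarith
  · rw [Finset.Ico_eq_empty (by omega)]; simp

theorem harm_lower : ∃ c C : ℝ, 0 < c ∧ ∀ x : ℝ, 1 ≤ x →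
    c * Real.log x - C ≤ ∑ m ∈ ideals K x, (absNorm m : ℝ)⁻¹ := by
  classical
  obtain ⟨κ, C, c0, hκ, hC, hc0, _, h⟩ := count_main K
  have hev : ∀ᶠ y : ℝ in atTop, κ / 2 * y ≤ (ideals K y).card := by
    filter_upwards [eventually_gt_atTop 0, (tendsto_rpow_atTop hc0).eventually_ge_atTop (2 * C / κ)] with y hy h1
    have h2 := (abs_le.mp (h y c0 hy hc0.le le_rfl)).1
    have h3 : C * y ^ (1 - c0) ≤ κ / 2 * y := by
      rw [Real.rpow_sub hy, Real.rpow_one]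
      rw [div_le_iff₀ hκ] at h1
      have : 0 < y ^ c0 := by positivity
      rw [mul_div_assoc', div_le_iff₀ this]
      nlinarith
    linarith
  obtain ⟨y0, hy0⟩ := eventually_atTop.mp hev
  set n0 := ⌈y0⌉₊ with hn0
  refine ⟨κ/2, κ/2 * n0, by positivity, fun x hx => ?_⟩
  set X := ⌊x⌋₊ with hX
  have hXx : (X:ℝ) ≤ x := Nat.floor_le (by linarith)
  have h1 : ∑ n ∈ Finset.range (X+1), ((ideals K n).card : ℝ) * (1 / (n * (n+1))) ≤
      ∑ m ∈ ideals K x, (absNorm m : ℝ)⁻¹ := by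
    calc _ = ∑ n ∈ Finset.range (X+1), ∑ m ∈ ideals K x, if absNorm m ≤ n then (1:ℝ) / (n * (n+1)) else 0 := by
          refine Finset.sum_congr rfl fun n hn => ?_
          rw [← Finset.sum_filter, Finset.sum_const, nsmul_eq_mul]
          congr 3
          ext m
          rw [Finset.mem_filter, mem_ideals, mem_ideals]
          have hn' : (n:ℝ) ≤ X := by exact_mod_cast Nat.lt_succ_iff.mp (Finset.mem_range.mp hn)
          constructor
          · rintro ⟨a, b⟩
            exact ⟨⟨a, b.trans (hn'.trans hXx)⟩, by exact_mod_cast b⟩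
          · rintro ⟨⟨a, _⟩, b⟩
            exact ⟨a, by exact_mod_cast b⟩
      _ = ∑ m ∈ ideals K x, ∑ n ∈ Finset.range (X+1), if absNorm m ≤ n then (1:ℝ) / (n * (n+1)) else 0 :=
          Finset.sum_comm
      _ ≤ _ := by
          refine Finset.sum_le_sum fun m hm => ?_
          rw [← Finset.sum_filter]
          have hf : (Finset.range (X+1)).filter (fun n => absNorm m ≤ n) = Finset.Ico (absNorm m) (X+1) := by
            ext n; simp [and_comm]
          rw [hf, ← one_div]
          exact tele _ _ (by exact_mod_cast norm_ge_one (mem_ideals.mp hm).1)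
  refine le_trans ?_ h1
  have h2 : ∀ n ∈ Finset.range (X+1), κ/2 * ((n:ℝ)+1)⁻¹ - (if n < n0 then κ/2 else 0) ≤
      ((ideals K n).card : ℝ) * (1 / (n * (n+1))) := by
    intro n _
    split_ifs with hn
    · have a1 : ((n:ℝ)+1)⁻¹ ≤ 1 := inv_le_one_of_one_le₀ (by linarith [Nat.cast_nonneg (α := ℝ) n])
      have a2 : 0 ≤ ((ideals K n).card : ℝ) * (1 / (n * (n+1))) := by positivity
      nlinarith
    · have a1 : y0 ≤ n := (Nat.le_ceil y0).trans (by exact_mod_cast not_lt.mp hn)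
      have a2 := hy0 n a1
      rw [sub_zero]
      rcases Nat.eq_zero_or_pos n with rfl | hn1
      · exfalso
        have : n0 = 0 := by omega
        -- y0 ≤ 0
        have b1 := hy0 (1/2) (le_trans a1 (by norm_num))
        have b2 : (ideals K (1/2)).card = 0 := by
          rw [Finset.card_eq_zero, Finset.eq_empty_iff_forall_notMem]
          intro m hm
          rw [mem_ideals] at hm
          linarith [norm_ge_one hm.1, hm.2]
        rw [b2] at b1
        norm_num at b1
        linarith
      · have hn2 : (0:ℝ) < n := by exact_mod_cast hn1
        calc κ/2 * ((n:ℝ)+1)⁻¹ = (κ/2 * n) * (1 / (n * (n+1))) := by field_simp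
          _ ≤ _ := by gcongr
  refine le_trans ?_ (Finset.sum_le_sum h2)
  rw [Finset.sum_sub_distrib, ← Finset.mul_sum]
  have h3 : Real.log x ≤ ∑ n ∈ Finset.range (X+1), ((n:ℝ)+1)⁻¹ := by
    have := log_add_one_le_harmonic (X+1)
    rw [harmonic] at this
    push_cast at this
    refine le_trans (Real.log_le_log (by linarith) ?_) this
    have := Nat.lt_floor_add_one x
    rw [← hX] at this
    linarith
  have h4 : ∑ n ∈ Finset.range (X+1), (if n < n0 then κ/2 else 0) ≤ κ/2 * n0 := by
    rw [← Finset.sum_filter, Finset.sum_const, nsmul_eq_mul, mul_comm]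
    gcongr
    calc _ ≤ (Finset.range n0).card := Finset.card_le_card fun n hn => by
            rw [Finset.mem_filter] at hn; exact Finset.mem_range.mpr hn.2
      _ = n0 := Finset.card_range _
  have : κ/2 * Real.log x ≤ κ/2 * ∑ n ∈ Finset.range (X+1), ((n:ℝ)+1)⁻¹ := by gcongr
  linarith

/-- sum of 1/Np -/
def Msum (x : ℝ) : ℝ := ∑ p ∈ primesLE K x, (absNorm p : ℝ)⁻¹

theorem sum_inv_sq : ∃ C : ℝ, 0 < C ∧ ∀ F : Finset (Ideal (𝓞 K)), (∀ m ∈ F, m ≠ 0) →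
    ∑ m ∈ F, ((absNorm m : ℝ)⁻¹)^2 ≤ C := by
  obtain ⟨C, hC, h⟩ := sum_rpow_le K
  refine ⟨C, hC, fun F hF => ?_⟩
  have := h 2 (by norm_num) le_rfl F hF
  norm_num at this
  refine le_trans (le_of_eq ?_) this
  refine Finset.sum_congr rfl fun m hm => ?_
  rw [inv_pow]

theorem inv_one_sub_le {u : ℝ} (h0 : 0 ≤ u) (h1 : u ≤ 1/2) : (1 - u)⁻¹ ≤ Real.exp (u + 2 * u^2) := by
  have h2 : 0 < 1 - u := by linarith
  rw [← Real.exp_log (inv_pos.mpr h2)]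
  apply Real.exp_le_exp.mpr
  refine (Real.log_le_sub_one_of_pos (inv_pos.mpr h2)).trans ?_
  have : (1-u)⁻¹ - 1 = u / (1-u) := by field_simp; ring
  rw [this, div_le_iff₀ h2]
  nlinarith [mul_nonneg h0 (mul_nonneg h0 (by linarith : 0 ≤ 1 - 2*u))]

theorem one_add_ge {v : ℝ} (h0 : 0 ≤ v) : Real.exp (v - v^2) ≤ 1 + v := by
  have h2 : 0 < 1 + v := by linarith
  rw [← Real.exp_log h2]
  apply Real.exp_le_exp.mpr
  have := Real.log_le_sub_one_of_pos (inv_pos.mpr h2)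
  rw [Real.log_inv] at this
  have h3 : (1+v)⁻¹ - 1 = - (v / (1+v)) := by field_simp; ring
  rw [h3] at this
  have h4 : v - v^2 ≤ v / (1+v) := by
    rw [le_div_iff₀ h2]
    nlinarith [pow_nonneg h0 3]
  linarith

theorem mertens_lower : ∃ C : ℝ, ∀ᶠ x in atTop, Real.log (Real.log x) - C ≤ Msum K x := by
  obtain ⟨c, C, hc, h⟩ := harm_lower K
  obtain ⟨C2, hC2, h2⟩ := sum_inv_sq K
  refine ⟨2 * C2 - Real.log (c/2), ?_⟩
  filter_upwards [eventually_ge_atTop 2, Real.tendsto_log_atTop.eventually_ge_atTop (2 * C / c),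
    Real.tendsto_log_atTop.eventually_gt_atTop 0] with x hx hx2 hx3
  have h3 := h x (by linarith)
  have h4 : ∑ m ∈ ideals K x, (absNorm m : ℝ)⁻¹ ≤ Real.exp (Msum K x + 2 * C2) := by
    refine (euler_le K (primesLE K x) (fun p hp => (mem_primesLE.mp hp).1) (ideals K x) ?_).trans ?_
    · intro m hm
      refine ⟨(mem_ideals.mp hm).1, fun p hp hpm => mem_primesLE.mpr ⟨hp, ?_⟩⟩
      refine le_trans ?_ (mem_ideals.mp hm).2
      have hd := Ideal.absNorm_dvd_absNorm_of_le (Ideal.le_of_dvd hpm)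
      have hm0 : 0 < absNorm m := by
        rw [Nat.pos_iff_ne_zero, Ne, Ideal.absNorm_eq_zero_iff]; exact (mem_ideals.mp hm).1
      exact_mod_cast Nat.le_of_dvd hm0 hd
    · calc _ ≤ ∏ p ∈ primesLE K x, Real.exp ((absNorm p : ℝ)⁻¹ + 2 * ((absNorm p : ℝ)⁻¹)^2) := by
            refine Finset.prod_le_prod (fun p hp => ?_) fun p hp => ?_
            all_goals
              have hp2 := norm_ge_two (mem_primesLE.mp hp).1
              have hN1 : (absNorm p : ℝ)⁻¹ ≤ 1/2 := by rw [one_div]; gcongr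
            · exact inv_nonneg.mpr (by linarith)
            · exact inv_one_sub_le (by positivity) hN1
        _ = Real.exp (Msum K x + 2 * ∑ p ∈ primesLE K x, ((absNorm p : ℝ)⁻¹)^2) := by
            rw [← Real.exp_sum, Finset.sum_add_distrib, Finset.mul_sum, Msum]
        _ ≤ _ := by
            gcongr
            exact h2 _ fun m hm => (mem_primesLE.mp hm).1.ne_zero
  have h5 : c / 2 * Real.log x ≤ Real.exp (Msum K x + 2 * C2) := by
    rw [div_le_iff₀ hc] at hx2
    linarith
  have h6 := Real.log_le_log (by positivity) h5
  rw [Real.log_exp, Real.log_mul (by positivity) (by positivity)] at h6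
  linarith

theorem euler_ge (s : ℝ) (P : Finset (Ideal (𝓞 K))) (hP : ∀ p ∈ P, Prime p) :
    ∃ F : Finset (Ideal (𝓞 K)), (∀ m ∈ F, m ≠ 0) ∧
      ∏ p ∈ P, (1 + (absNorm p : ℝ)^(-s)) = ∑ m ∈ F, (absNorm m : ℝ)^(-s) := by
  classical
  refine ⟨P.powerset.image (fun A => ∏ p ∈ A, p), ?_, ?_⟩
  · intro m hm
    obtain ⟨A, hA, rfl⟩ := Finset.mem_image.mp hm
    rw [Finset.prod_ne_zero_iff]
    exact fun p hp => (hP p (Finset.mem_powerset.mp hA hp)).ne_zero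
  · rw [Finset.prod_one_add, Finset.sum_image]
    · refine Finset.sum_congr rfl fun A hA => ?_
      rw [map_prod]
      push_cast
      rw [Real.finsetProd_rpow _ _ (fun _ _ => by positivity)]
    · have key : ∀ A ∈ P.powerset, ∀ p ∈ P, p ∣ ∏ q ∈ A, q ↔ p ∈ A := by
        intro A hA p hp
        constructor
        · intro hd
          obtain ⟨q, hq, hpq⟩ := (hP p hp).exists_mem_finset_dvd hd
          have hq' := hP q (Finset.mem_powerset.mp hA hq)
          rw [associated_iff_eq.mp (((hP p hp).dvd_prime_iff_associated hq').mp hpq)]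
          exact hq
        · exact fun h => Finset.dvd_prod_of_mem _ h
      intro A hA B hB hAB
      ext p
      constructor
      · intro hp
        have hpP := Finset.mem_powerset.mp hA hp
        rw [← key B hB p hpP, ← show ∏ p ∈ A, p = ∏ p ∈ B, p from hAB, key A hA p hpP]; exact hp
      · intro hp
        have hpP := Finset.mem_powerset.mp hB hp
        rw [← key A hA p hpP, show ∏ p ∈ A, p = ∏ p ∈ B, p from hAB, key B hB p hpP]; exact hp

theorem mertens_upper : ∃ C : ℝ, ∀ᶠ x in atTop, Msum K x ≤ Real.log (Real.log x) +
    Real.log (Real.log (Real.log x)) + C := by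
  obtain ⟨C1, hC1, h1⟩ := sum_rpow_le K
  obtain ⟨C2, hC2, h2⟩ := sum_inv_sq K
  refine ⟨4 + 3 * (|Real.log C1| + C2), ?_⟩
  filter_upwards [eventually_ge_atTop 2, Real.tendsto_log_atTop.eventually_ge_atTop 1,
    (Real.tendsto_log_atTop.comp Real.tendsto_log_atTop).eventually_ge_atTop 1] with x hx hl hL
  simp only [Function.comp_apply] at hL
  set l := Real.log x with hl'
  set L := Real.log l with hL'
  set u := (L * l)⁻¹ with hu
  have hu0 : 0 < u := by positivity
  have hu1 : u ≤ 1 := inv_le_one_of_one_le₀ (by nlinarith)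
  obtain ⟨F, hF, hFe⟩ := euler_ge K (1+u) (primesLE K x) (fun p hp => (mem_primesLE.mp hp).1)
  have h3 := h1 (1+u) (by linarith) (by linarith) F hF
  rw [← hFe, add_sub_cancel_left] at h3
  set V := ∑ p ∈ primesLE K x, (absNorm p : ℝ)^(-(1+u)) with hV
  have h4 : Real.exp (V - C2) ≤ C1 / u := by
    refine le_trans ?_ h3
    calc Real.exp (V - C2) ≤ Real.exp (∑ p ∈ primesLE K x, ((absNorm p : ℝ)^(-(1+u)) - ((absNorm p : ℝ)^(-(1+u)))^2)) := by
          rw [Finset.sum_sub_distrib]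
          gcongr
          refine le_trans ?_ (h2 (primesLE K x) fun m hm => (mem_primesLE.mp hm).1.ne_zero)
          refine Finset.sum_le_sum fun p hp => ?_
          have hp2 := norm_ge_two (mem_primesLE.mp hp).1
          gcongr
          rw [← Real.rpow_neg_one]
          exact Real.rpow_le_rpow_of_exponent_le (by linarith) (by linarith)
      _ ≤ _ := by
          rw [Real.exp_sum]
          exact Finset.prod_le_prod (fun _ _ => (Real.exp_pos _).le) fun p hp => one_add_ge (by positivity)
  have h5 : V ≤ L + Real.log L + Real.log C1 + C2 := by
    have := Real.log_le_log (Real.exp_pos _) h4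
    rw [Real.log_exp, hu, div_inv_eq_mul, Real.log_mul (by positivity) (by positivity),
      Real.log_mul (by positivity) (by positivity)] at this
    linarith
  have hV0 : 0 ≤ V := Finset.sum_nonneg fun _ _ => by positivity
  have h6 : Msum K x ≤ Real.exp (1/L) * V := by
    rw [Msum, hV, Finset.mul_sum]
    refine Finset.sum_le_sum fun p hp => ?_
    have hp2 := norm_ge_two (mem_primesLE.mp hp).1
    have hp0 : (0:ℝ) < absNorm p := by linarith
    have e1 : (absNorm p : ℝ)⁻¹ = (absNorm p : ℝ)^u * (absNorm p : ℝ)^(-(1+u)) := by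
      rw [← Real.rpow_add hp0, ← Real.rpow_neg_one]; congr 1; ring
    have e2 : Real.exp (1/L) = x ^ u := by
      rw [Real.rpow_def_of_pos (by linarith), hu, ← hl']
      congr 1; field_simp
    rw [e1, e2]
    gcongr
    exact (mem_primesLE.mp hp).2
  have h7 : Real.exp (1/L) ≤ 1 + 2 * (1/L) := by
    have hb := Real.abs_exp_sub_one_sub_id_le (x := 1/L) (by
      rw [abs_of_pos (by positivity), div_le_one (by positivity)]; exact hL)
    have hb2 : (1/L)^2 ≤ 1/L := by
      have : 1/L ≤ 1 := by rw [div_le_one (by positivity)]; exact hL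
      nlinarith [show 0 < 1/L by positivity]
    linarith [(abs_le.mp hb).2]
  have h8 : Real.log L ≤ L := (Real.log_le_sub_one_of_pos (by positivity)).trans (by linarith)
  have h9 : 0 ≤ Real.log L := Real.log_nonneg hL
  set D := |Real.log C1| + C2 with hD
  have hD0 : 0 ≤ D := by positivity
  have h10 : V ≤ L + Real.log L + D := by linarith [le_abs_self (Real.log C1)]
  have hI : 1/L * L = 1 := by field_simp
  have hI1 : 1/L ≤ 1 := by rw [div_le_one (by positivity)]; exact hL
  have hI0 : 0 < 1/L := by positivity
  calc Msum K x ≤ (1 + 2 * (1/L)) * (L + Real.log L + D) := h6.trans (by gcongr)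
    _ = L + Real.log L + D + 2 * (1/L * L) + 2 * (1/L * Real.log L) + 2 * (1/L * D) := by ring
    _ ≤ L + Real.log L + D + 2 * (1/L * L) + 2 * (1/L * L) + 2 * (1 * D) := by gcongr
    _ = _ := by rw [hI]; ring

end EK

namespace EK
open scoped Pointwise
open NumberField Ideal


variable {K} in
/-- local factor -/
def gfac (h : ℕ) (z : ℂ) (m p : Ideal (𝓞 K)) : ℂ :=
  open scoped Classical in
  1 + (z - 1) * (if p ∣ m then 1 else 0) - z * (if p ^ h ∣ m then 1 else 0)

/-- ideals of norm ≤ x divisible by d -/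
def idealsDvd (x : ℝ) (d : Ideal (𝓞 K)) : Finset (Ideal (𝓞 K)) :=
  open scoped Classical in (ideals K x).filter (fun m => d ∣ m)

theorem card_idealsDvd (x : ℝ) (d : Ideal (𝓞 K)) (hd : d ≠ 0) :
    (idealsDvd K x d).card = (ideals K (x / absNorm d)).card := by
  classical
  have hd1 := norm_ge_one hd
  symm
  refine Finset.card_bij (fun m _ => d * m) ?_ ?_ ?_
  · intro m hm
    rw [mem_ideals] at hm
    rw [idealsDvd, Finset.mem_filter, mem_ideals]
    refine ⟨⟨mul_ne_zero hd hm.1, ?_⟩, dvd_mul_right _ _⟩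
    rw [_root_.map_mul, Nat.cast_mul]
    have := (le_div_iff₀ (by linarith)).mp hm.2
    linarith
  · intro a _ b _ hab
    exact mul_left_cancel₀ hd hab
  · intro m hm
    rw [idealsDvd, Finset.mem_filter, mem_ideals] at hm
    obtain ⟨⟨h0, hx⟩, c, rfl⟩ := hm
    refine ⟨c, ?_, rfl⟩
    rw [mem_ideals]
    refine ⟨right_ne_zero_of_mul h0, ?_⟩
    rw [le_div_iff₀ (by linarith)]
    rw [_root_.map_mul, Nat.cast_mul] at hx
    linarith

theorem main_sum (κ C c : ℝ) (hcount : ∀ y : ℝ, 0 < y →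
      |((ideals K y).card : ℝ) - κ * y| ≤ C * y ^ (1 - c))
    (z : ℂ) (hz : ‖z‖ ≤ 1) (h : ℕ) (x : ℝ) (hx : 0 < x) (P : Finset (Ideal (𝓞 K))) :
    (∀ p ∈ P, Prime p) → ∀ d : Ideal (𝓞 K), d ≠ 0 → (∀ p ∈ P, ¬ p ∣ d) →
    ‖(∑ m ∈ idealsDvd K x d, ∏ p ∈ P, gfac h z m p) -
      (κ * (x / absNorm d) : ℝ) * ∏ p ∈ P, (1 + (z - 1) * ((absNorm p : ℝ)⁻¹ : ℝ) - z * (((absNorm p : ℝ)⁻¹)^h : ℝ))‖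
      ≤ C * (x / absNorm d) ^ (1 - c) * ∏ p ∈ P, (1 + ‖z - 1‖ * ((absNorm p : ℝ)⁻¹) ^ (1 - c)
        + (((absNorm p : ℝ)⁻¹)^h) ^ (1 - c)) := by
  classical
  induction P using Finset.induction_on with
  | empty =>
    intro _ d hd _
    have hd1 := norm_ge_one hd
    have := hcount (x / absNorm d) (by positivity)
    simp only [Finset.prod_empty, mul_one, Finset.sum_const, nsmul_eq_mul, card_idealsDvd K x d hd]
    rw [← Complex.ofReal_natCast, ← Complex.ofReal_sub, Complex.norm_real]
    exact this
  | insert p P hpP ih =>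
    intro hP d hd hcop
    have hp : Prime p := hP p (Finset.mem_insert_self _ _)
    have hpd : ¬ p ∣ d := hcop p (Finset.mem_insert_self _ _)
    have hP' : ∀ q ∈ P, Prime q := fun q hq => hP q (Finset.mem_insert_of_mem hq)
    have hd1 := norm_ge_one hd
    have hp2 := norm_ge_two hp
    have hqp : ∀ q ∈ P, ¬ q ∣ p := fun q hq hqp => by
      have := associated_iff_eq.mp (((hP' q hq).dvd_prime_iff_associated hp).mp hqp)
      exact hpP (this ▸ hq)
    have hcopk : ∀ k, ∀ q ∈ P, ¬ q ∣ d * p ^ k := fun k q hq hqd => by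
      rcases (hP' q hq).dvd_or_dvd hqd with h1 | h1
      · exact hcop q (Finset.mem_insert_of_mem hq) h1
      · exact hqp q hq ((hP' q hq).dvd_of_dvd_pow h1)
    have hdk : ∀ k, d * p ^ k ≠ 0 := fun k => mul_ne_zero hd (pow_ne_zero _ hp.ne_zero)
    have I0 := ih hP' d hd (fun q hq => hcop q (Finset.mem_insert_of_mem hq))
    have I1 := ih hP' (d * p ^ 1) (hdk 1) (hcopk 1)
    have Ih := ih hP' (d * p ^ h) (hdk h) (hcopk h)
    have hdvd : ∀ k m, d ∣ m → (p ^ k ∣ m ↔ d * p ^ k ∣ m) := fun k m hdm => by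
      constructor
      · intro hpm
        have hrel : IsRelPrime d (p ^ k) := by
          have : IsRelPrime p d := hp.irreducible.isRelPrime_iff_not_dvd.mpr hpd
          exact this.symm.pow_right
        exact hrel.mul_dvd hdm hpm
      · exact fun hm => (dvd_mul_left _ _).trans hm
    set Φ : Ideal (𝓞 K) → ℂ := fun m => ∏ q ∈ P, gfac h z m q with hΦ
    have hfil : ∀ k, ∑ m ∈ idealsDvd K x d, (if p ^ k ∣ m then (1:ℂ) else 0) * Φ m =
        ∑ m ∈ idealsDvd K x (d * p ^ k), Φ m := fun k => by
      simp_rw [ite_mul, one_mul, zero_mul]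
      rw [← Finset.sum_filter]
      refine Finset.sum_congr ?_ fun _ _ => rfl
      ext m
      simp only [idealsDvd, Finset.mem_filter]
      constructor
      · rintro ⟨⟨a, b⟩, e⟩; exact ⟨a, (hdvd k m b).mp e⟩
      · rintro ⟨a, b⟩
        have hdm : d ∣ m := (dvd_mul_right _ _).trans b
        exact ⟨⟨a, hdm⟩, (hdvd k m hdm).mpr b⟩
    have hsum : ∑ m ∈ idealsDvd K x d, ∏ q ∈ insert p P, gfac h z m q =
        ∑ m ∈ idealsDvd K x d, Φ m + (z - 1) * ∑ m ∈ idealsDvd K x (d * p ^ 1), Φ m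
          - z * ∑ m ∈ idealsDvd K x (d * p ^ h), Φ m := by
      rw [← hfil, ← hfil, Finset.mul_sum, Finset.mul_sum, ← Finset.sum_add_distrib, ← Finset.sum_sub_distrib]
      refine Finset.sum_congr rfl fun m _ => ?_
      rw [Finset.prod_insert hpP, pow_one]
      simp only [hΦ, gfac]
      ring
    rw [hsum, Finset.prod_insert hpP, Finset.prod_insert hpP]
    have hdiv : ∀ k, x / (absNorm (d * p ^ k) : ℝ) = x / absNorm d * ((absNorm p : ℝ)⁻¹)^k := fun k => by
      rw [_root_.map_mul, _root_.map_pow, Nat.cast_mul, Nat.cast_pow, inv_pow]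
      field_simp
    rw [hdiv] at I1 Ih
    rw [pow_one] at I1
    rw [Real.mul_rpow (by positivity) (by positivity)] at I1 Ih
    set X := x / (absNorm d : ℝ) with hX
    set A := ∏ p ∈ P, (1 + (z - 1) * ((absNorm p : ℝ)⁻¹ : ℝ) - z * (((absNorm p : ℝ)⁻¹)^h : ℝ)) with hA
    set B := ∏ p ∈ P, (1 + ‖z - 1‖ * ((absNorm p : ℝ)⁻¹) ^ (1 - c)
        + (((absNorm p : ℝ)⁻¹)^h) ^ (1 - c)) with hB
    set S0 := ∑ m ∈ idealsDvd K x d, Φ m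
    set S1 := ∑ m ∈ idealsDvd K x (d * p), Φ m with hS1
    set Sh := ∑ m ∈ idealsDvd K x (d * p^h), Φ m
    set u := (absNorm p : ℝ)⁻¹ with hu
    rw [pow_one] at *
    have hid : S0 + (z - 1) * S1 - z * Sh - (κ * X : ℝ) *
        ((1 + (z - 1) * (u : ℝ) - z * (u^h : ℝ)) * A) =
        (S0 - (κ * X : ℝ) * A) + (z - 1) * (S1 - (κ * (X * u) : ℝ) * A)
          - z * (Sh - (κ * (X * u^h) : ℝ) * A) := by
      push_cast; ring
    rw [hid]
    refine (norm_sub_le _ _).trans ((add_le_add_left (norm_add_le _ _) _).trans ?_)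
    rw [norm_mul, norm_mul]
    calc _ ≤ C * X ^ (1 - c) * B + ‖z-1‖ * (C * (X ^ (1 - c) * u ^ (1 - c)) * B) +
          1 * (C * (X ^ (1 - c) * (u ^ h) ^ (1 - c)) * B) := by
          refine add_le_add (add_le_add I0 (mul_le_mul_of_nonneg_left I1 (norm_nonneg _))) ?_
          exact mul_le_mul hz Ih (norm_nonneg _) zero_le_one
      _ = _ := by ring

end EK

namespace EK
open scoped Pointwise
open NumberField Ideal


variable {K} in
/-- number of p in P dividing m -/
def omP (P : Finset (Ideal (𝓞 K))) (m : Ideal (𝓞 K)) : ℕ :=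
  open scoped Classical in (P.filter (fun p => p ∣ m)).card

variable {K} in
/-- h-free predicate -/
def HFr (h : ℕ) (m : Ideal (𝓞 K)) : Prop := ∀ p, Prime p → ¬ p ^ h ∣ m

/-- h-free ideals of norm ≤ x -/
def HF (h : ℕ) (x : ℝ) : Finset (Ideal (𝓞 K)) :=
  open scoped Classical in (ideals K x).filter (fun m => HFr h m)

open scoped Classical in
theorem prod_gfac (h : ℕ) (hh : 1 ≤ h) (z : ℂ) (m : Ideal (𝓞 K)) (P : Finset (Ideal (𝓞 K))) :
    ∏ p ∈ P, gfac h z m p = if (∀ p ∈ P, ¬ p ^ h ∣ m) then z ^ omP P m else 0 := by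
  split_ifs with hc
  · rw [omP, ← Finset.prod_const, Finset.prod_filter]
    refine Finset.prod_congr rfl fun p hp => ?_
    rw [gfac, if_neg (hc p hp)]
    split_ifs <;> simp
  · push Not at hc
    obtain ⟨p, hp, hpm⟩ := hc
    refine Finset.prod_eq_zero hp ?_
    rw [gfac, if_pos hpm, if_pos ((dvd_pow_self p (by omega)).trans hpm)]
    ring

variable {K} in
theorem norm_le_of_dvd {p m : Ideal (𝓞 K)} (hm : m ≠ 0) (hpm : p ∣ m) : (absNorm p : ℝ) ≤ absNorm m := by
  have hd := Ideal.absNorm_dvd_absNorm_of_le (Ideal.le_of_dvd hpm)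
  have hm0 : 0 < absNorm m := by
    rw [Nat.pos_iff_ne_zero, Ne, Ideal.absNorm_eq_zero_iff]; exact hm
  exact_mod_cast Nat.le_of_dvd hm0 hd

/-- bad ideals -/
def badSet (h : ℕ) (x y : ℝ) : Finset (Ideal (𝓞 K)) :=
  open scoped Classical in (ideals K x).filter (fun m => ∃ p, Prime p ∧ y < absNorm p ∧ p ^ h ∣ m)

theorem tail_card : ∃ C : ℝ, 0 < C ∧ ∀ h : ℕ, 2 ≤ h → ∀ x y : ℝ, 0 < x → 1 ≤ y →
    ((badSet K h x y).card : ℝ) ≤ C * x * y ^ (-(1/2) : ℝ) := by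
  classical
  obtain ⟨C1, hC1, h1⟩ := count_le K
  obtain ⟨C2, hC2, h2⟩ := sum_rpow_le K
  refine ⟨C1 * (2 * C2), by positivity, fun h hh x y hx hy => ?_⟩
  set Q := (primesLE K x).filter (fun p => y < absNorm p) with hQ
  have hsub : badSet K h x y ⊆ Q.biUnion (fun p => idealsDvd K x (p ^ h)) := by
    intro m hm
    rw [badSet, Finset.mem_filter] at hm
    obtain ⟨hm1, p, hp, hpy, hpm⟩ := hm
    rw [Finset.mem_biUnion]
    refine ⟨p, ?_, ?_⟩
    · rw [hQ, Finset.mem_filter, mem_primesLE]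
      exact ⟨⟨hp, (norm_le_of_dvd (mem_ideals.mp hm1).1 ((dvd_pow_self p (by omega)).trans hpm)).trans
        (mem_ideals.mp hm1).2⟩, hpy⟩
    · rw [idealsDvd, Finset.mem_filter]; exact ⟨hm1, hpm⟩
  have h3 : ((badSet K h x y).card : ℝ) ≤ ∑ p ∈ Q, ((idealsDvd K x (p ^ h)).card : ℝ) := by
    exact_mod_cast (Finset.card_le_card hsub).trans Finset.card_biUnion_le
  refine h3.trans ?_
  have h4 : ∀ p ∈ Q, ((idealsDvd K x (p ^ h)).card : ℝ) ≤
      C1 * x * (y ^ (-(1/2) : ℝ) * (absNorm p : ℝ) ^ (-(3/2) : ℝ)) := by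
    intro p hp
    rw [hQ, Finset.mem_filter, mem_primesLE] at hp
    have hp2 := norm_ge_two hp.1.1
    have hp0 : (0:ℝ) < absNorm p := by linarith
    rw [card_idealsDvd K x _ (pow_ne_zero _ hp.1.1.ne_zero)]
    refine (h1 _ (by positivity)).trans ?_
    rw [mul_assoc, div_eq_mul_inv]
    gcongr
    rw [_root_.map_pow, Nat.cast_pow]
    calc ((absNorm p : ℝ)^h)⁻¹ ≤ ((absNorm p : ℝ)^2)⁻¹ := by
          gcongr; linarith
      _ = (absNorm p : ℝ)^(-(1/2):ℝ) * (absNorm p : ℝ) ^ (-(3/2) : ℝ) := by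
          rw [← Real.rpow_add hp0, ← Real.rpow_natCast, ← Real.rpow_neg hp0.le]
          norm_num
      _ ≤ _ := by
          gcongr ?_ * _
          exact Real.rpow_le_rpow_of_nonpos (by linarith) hp.2.le (by norm_num)
  refine (Finset.sum_le_sum h4).trans ?_
  rw [← Finset.mul_sum, ← Finset.mul_sum]
  have h5 := h2 (3/2) (by norm_num) (by norm_num) Q (fun m hm => by
    rw [hQ, Finset.mem_filter, mem_primesLE] at hm; exact hm.1.1.ne_zero)
  calc _ ≤ C1 * x * (y ^ (-(1/2) : ℝ) * (C2 / (3/2 - 1))) := by gcongr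
    _ = _ := by ring

theorem HF_sum (h : ℕ) (hh : 2 ≤ h) (z : ℂ) (hz : ‖z‖ ≤ 1) (x y : ℝ) :
    ‖∑ m ∈ HF K h x, z ^ omP (primesLE K y) m - ∑ m ∈ ideals K x, ∏ p ∈ primesLE K y, gfac h z m p‖
      ≤ (badSet K h x y).card := by
  classical
  simp_rw [prod_gfac K h (by omega) z]
  rw [HF, Finset.sum_filter, ← Finset.sum_sub_distrib]
  refine (norm_sum_le _ _).trans ?_
  rw [badSet, Finset.card_filter]
  push_cast
  refine Finset.sum_le_sum fun m hm => ?_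
  by_cases h1 : HFr h m
  · have h2 : ∀ p ∈ primesLE K y, ¬ p ^ h ∣ m := fun p hp => h1 p (mem_primesLE.mp hp).1
    rw [if_pos h1, if_pos h2, sub_self, norm_zero]
    split_ifs <;> simp
  · rw [if_neg h1, zero_sub, norm_neg]
    by_cases h2 : ∀ p ∈ primesLE K y, ¬ p ^ h ∣ m
    · rw [if_pos h2, if_pos, norm_pow]
      · exact pow_le_one₀ (norm_nonneg _) hz
      · unfold HFr at h1
        push Not at h1
        obtain ⟨p, hp, hpm⟩ := h1
        refine ⟨p, hp, ?_, hpm⟩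
        by_contra hcon
        exact h2 p (mem_primesLE.mpr ⟨hp, not_lt.mp hcon⟩) hpm
    · rw [if_neg h2, norm_zero]
      split_ifs <;> simp

variable {K} in
/-- the probability a_p -/
def afac (h : ℕ) (p : Ideal (𝓞 K)) : ℝ :=
  ((absNorm p : ℝ)⁻¹ - ((absNorm p : ℝ)⁻¹)^h) / (1 - ((absNorm p : ℝ)⁻¹)^h)

/-- density of h-free part -/
def A1 (h : ℕ) (y : ℝ) : ℝ := ∏ p ∈ primesLE K y, (1 - ((absNorm p : ℝ)⁻¹)^h)

variable {K} in
theorem u_bounds {p : Ideal (𝓞 K)} (hp : Prime p) {h : ℕ} (hh : 2 ≤ h) :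
    0 < (absNorm p : ℝ)⁻¹ ∧ (absNorm p : ℝ)⁻¹ ≤ 1/2 ∧ ((absNorm p : ℝ)⁻¹)^h ≤ ((absNorm p : ℝ)⁻¹)^2 ∧
      ((absNorm p : ℝ)⁻¹)^h ≤ 1/4 ∧ 0 < ((absNorm p : ℝ)⁻¹)^h := by
  have hp2 := norm_ge_two hp
  have h0 : 0 < (absNorm p : ℝ)⁻¹ := by positivity
  have h1 : (absNorm p : ℝ)⁻¹ ≤ 1/2 := by rw [one_div]; gcongr
  have h2 : ((absNorm p : ℝ)⁻¹)^h ≤ ((absNorm p : ℝ)⁻¹)^2 := pow_le_pow_of_le_one h0.le (by linarith) hh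
  exact ⟨h0, h1, h2, by nlinarith, by positivity⟩

theorem A1_ge : ∃ c : ℝ, 0 < c ∧ ∀ h : ℕ, 2 ≤ h → ∀ y, c ≤ A1 K h y := by
  obtain ⟨C2, hC2, h2⟩ := sum_inv_sq K
  refine ⟨Real.exp (-(2*C2)), Real.exp_pos _, fun h hh y => ?_⟩
  calc Real.exp (-(2*C2)) ≤ Real.exp (∑ p ∈ primesLE K y, -(2 * ((absNorm p : ℝ)⁻¹)^2)) := by
        rw [Finset.sum_neg_distrib, ← Finset.mul_sum]
        gcongr
        exact h2 _ fun m hm => (mem_primesLE.mp hm).1.ne_zero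
    _ ≤ A1 K h y := by
        rw [Real.exp_sum, A1]
        refine Finset.prod_le_prod (fun _ _ => (Real.exp_pos _).le) fun p hp => ?_
        obtain ⟨a, b, c, d, e⟩ := u_bounds (mem_primesLE.mp hp).1 hh
        set v := ((absNorm p : ℝ)⁻¹)^h
        have h3 := inv_one_sub_le e.le (by linarith)
        rw [Real.exp_neg]
        rw [inv_le_comm₀ (Real.exp_pos _) (by linarith)]
        refine h3.trans (Real.exp_le_exp.mpr ?_)
        nlinarith

theorem approx_static (h : ℕ) (hh : 2 ≤ h) : ∃ κ C c0 : ℝ, 0 < κ ∧ 0 < C ∧ 0 < c0 ∧ ∀ (z : ℂ) (x y c : ℝ),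
    ‖z‖ ≤ 1 → 1 ≤ x → 1 ≤ y → 0 ≤ c → c ≤ c0 →
    ‖(∑ m ∈ HF K h x, z ^ omP (primesLE K y) m) / ((κ * x * A1 K h y : ℝ) : ℂ) -
      ∏ p ∈ primesLE K y, (1 + (z - 1) * (afac h p : ℝ))‖ ≤
    C * (y ^ (-(1/2) : ℝ) + x ^ (-c) * Real.exp (‖z - 1‖ * (y ^ c * Msum K y))) := by
  classical
  obtain ⟨κ, C, c0, hκ, hC, hc0, hc04, hcount⟩ := count_main K
  obtain ⟨C1, hC1, htail⟩ := tail_card K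
  obtain ⟨C2, hC2, h2⟩ := sum_rpow_le K
  obtain ⟨c1, hc1, hA1⟩ := A1_ge K
  refine ⟨κ, (C1 + C * Real.exp (2 * C2)) / (κ * c1), c0, hκ, by positivity, hc0, ?_⟩
  intro z x y c hz hx hy hc hcc0
  have hx0 : 0 < x := by linarith
  set P := primesLE K y with hP
  have hPp : ∀ p ∈ P, Prime p := fun p hp => (mem_primesLE.mp hp).1
  have hms := main_sum K κ C c (fun y hy => hcount y c hy hc hcc0) z hz h x hx0 P hPp 1 one_ne_zero
    (fun p hp hd => (hPp p hp).not_isUnit (isUnit_of_dvd_one hd))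
  have hid1 : idealsDvd K x 1 = ideals K x := by
    rw [idealsDvd]; ext m; simp
  rw [hid1, _root_.map_one, Nat.cast_one, div_one] at hms
  have hfac : ∏ p ∈ P, (1 + (z - 1) * ((absNorm p : ℝ)⁻¹ : ℝ) - z * (((absNorm p : ℝ)⁻¹)^h : ℝ)) =
      (A1 K h y : ℂ) * ∏ p ∈ P, (1 + (z - 1) * (afac h p : ℝ)) := by
    rw [A1, Complex.ofReal_prod, ← Finset.prod_mul_distrib]
    refine Finset.prod_congr rfl fun p hp => ?_
    obtain ⟨a, b, c, d, e⟩ := u_bounds (hPp p hp) hh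
    rw [afac]
    set v := ((absNorm p : ℝ)⁻¹)^h
    set u := (absNorm p : ℝ)⁻¹
    have h1 : ((1 - v : ℝ) : ℂ) ≠ 0 := by exact_mod_cast (by linarith : (1 - v) ≠ 0)
    push_cast at h1 ⊢
    field_simp
    ring
  rw [hfac] at hms
  have hA1y := hA1 h hh y
  set G := ∏ p ∈ P, (1 + (z - 1) * (afac h p : ℝ)) with hG
  have hB : ∏ p ∈ P, (1 + ‖z - 1‖ * ((absNorm p : ℝ)⁻¹) ^ (1 - c)
        + (((absNorm p : ℝ)⁻¹)^h) ^ (1 - c)) ≤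
      Real.exp (‖z - 1‖ * (y ^ c * Msum K y)) * Real.exp (2 * C2) := by
    rw [← Real.exp_add]
    calc _ ≤ ∏ p ∈ P, Real.exp (‖z-1‖ * (y ^ c * (absNorm p : ℝ)⁻¹) + (absNorm p : ℝ)^(-(3/2):ℝ)) := by
          refine Finset.prod_le_prod (fun p hp => by positivity) fun p hp => ?_
          obtain ⟨a, b, c', d, e⟩ := u_bounds (hPp p hp) hh
          have hp2 := norm_ge_two (hPp p hp)
          have hp0 : (0:ℝ) < absNorm p := by linarith
          have e1 : ((absNorm p : ℝ)⁻¹) ^ (1 - c) ≤ y ^ c * (absNorm p : ℝ)⁻¹ := by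
            rw [Real.rpow_sub a, Real.rpow_one, Real.inv_rpow hp0.le, div_inv_eq_mul, mul_comm]
            gcongr
            exact (mem_primesLE.mp hp).2
          have e2 : (((absNorm p : ℝ)⁻¹)^h) ^ (1 - c) ≤ (absNorm p : ℝ)^(-(3/2):ℝ) := by
            calc _ ≤ (((absNorm p : ℝ)⁻¹)^2) ^ (1 - c) := by
                  apply Real.rpow_le_rpow e.le c' (by linarith)
              _ ≤ (((absNorm p : ℝ)⁻¹)^2) ^ (3/4:ℝ) := by
                  apply Real.rpow_le_rpow_of_exponent_ge (by positivity) (by nlinarith) (by linarith)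
              _ = _ := by
                  rw [← Real.rpow_natCast, ← Real.rpow_mul a.le, Real.inv_rpow hp0.le, ← Real.rpow_neg hp0.le]
                  norm_num
          have e3 := mul_le_mul_of_nonneg_left e1 (norm_nonneg (z-1))
          refine le_trans ?_ (Real.add_one_le_exp _)
          linarith
      _ = Real.exp (‖z - 1‖ * (y ^ c * Msum K y) + ∑ p ∈ P, (absNorm p : ℝ)^(-(3/2):ℝ)) := by
          rw [← Real.exp_sum, Finset.sum_add_distrib, ← Finset.mul_sum, ← Finset.mul_sum, Msum]
      _ ≤ _ := by
          gcongr
          have := h2 (3/2) (by norm_num) (by norm_num) P fun m hm => (hPp m hm).ne_zero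
          refine this.trans (le_of_eq (by ring))
  have h4 := (HF_sum K h hh z hz x y).trans (htail h hh x y hx0 hy)
  set S := ∑ m ∈ HF K h x, z ^ omP P m with hS
  set S' := ∑ m ∈ ideals K x, ∏ p ∈ P, gfac h z m p with hS'
  have hA0 : 0 < A1 K h y := by linarith
  have h5 : ‖S - ((κ * x * A1 K h y : ℝ) : ℂ) * G‖ ≤ C1 * x * y ^ (-(1/2) : ℝ) +
      C * x ^ (1 - c) * (Real.exp (‖z - 1‖ * (y ^ c * Msum K y)) * Real.exp (2 * C2)) := by
    have : S - ((κ * x * A1 K h y : ℝ) : ℂ) * G = (S - S') + (S' - ((κ * x : ℝ):ℂ) * ((A1 K h y : ℂ) * G)) := by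
      push_cast; ring
    rw [this]
    refine (norm_add_le _ _).trans (add_le_add h4 (hms.trans ?_))
    gcongr
  have hD : 0 < κ * x * A1 K h y := by positivity
  have hDc : ((κ * x * A1 K h y : ℝ) : ℂ) ≠ 0 := by exact_mod_cast hD.ne'
  rw [show S / ((κ * x * A1 K h y : ℝ) : ℂ) - G = (S - ((κ * x * A1 K h y : ℝ) : ℂ) * G) / ((κ * x * A1 K h y : ℝ) : ℂ) by
    field_simp, norm_div, Complex.norm_real, Real.norm_eq_abs, abs_of_pos hD]
  set E := Real.exp (‖z - 1‖ * (y ^ c * Msum K y)) with hE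
  calc _ ≤ (C1 * x * y ^ (-(1/2) : ℝ) + C * x ^ (1 - c) * (E * Real.exp (2 * C2))) / (κ * x * c1) := by
        gcongr
    _ = (C1 * y ^ (-(1/2) : ℝ) + C * Real.exp (2 * C2) * (x ^ (-c) * E)) / (κ * c1) := by
        rw [sub_eq_add_neg, Real.rpow_add hx0, Real.rpow_one]
        field_simp
    _ ≤ ((C1 + C * Real.exp (2 * C2)) * y ^ (-(1/2) : ℝ) + (C1 + C * Real.exp (2 * C2)) * (x ^ (-c) * E)) / (κ * c1) := by
        have hy0 : 0 < y := by linarith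
        have : 0 ≤ C * Real.exp (2 * C2) := by positivity
        gcongr <;> linarith
    _ = _ := by ring

end EK

namespace EK
open scoped Pointwise
open NumberField Ideal


/-- log log -/
def LL (x : ℝ) : ℝ := Real.log (Real.log x)
/-- cutoff -/
def yy (x : ℝ) : ℝ := Real.exp (Real.log x / LL x)

theorem LL_tendsto : Tendsto LL atTop atTop := Real.tendsto_log_atTop.comp Real.tendsto_log_atTop

theorem div_log_tendsto : Tendsto (fun l : ℝ => l / Real.log l) atTop atTop := by
  have h1 : Tendsto (fun l : ℝ => Real.log l / l) atTop (𝓝 0) := by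
    simpa using (Real.isLittleO_log_id_atTop).tendsto_div_nhds_zero
  have h2 : Tendsto (fun l : ℝ => Real.log l / l) atTop (𝓝[>] 0) := by
    rw [tendsto_nhdsWithin_iff]
    refine ⟨h1, ?_⟩
    filter_upwards [eventually_gt_atTop 1] with l hl
    exact div_pos (Real.log_pos hl) (by linarith)
  refine (h2.inv_tendsto_nhdsGT_zero).congr fun l => ?_
  simp

theorem logyy_tendsto : Tendsto (fun x => Real.log x / LL x) atTop atTop :=
  div_log_tendsto.comp Real.tendsto_log_atTop

theorem yy_tendsto : Tendsto yy atTop atTop := Real.tendsto_exp_atTop.comp logyy_tendsto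

theorem log_div_sqrt : Tendsto (fun x => Real.log (LL x) / √(LL x)) atTop (𝓝 0) := by
  have h1 : Tendsto (fun L : ℝ => Real.log L / √L) atTop (𝓝 0) := by
    have := (isLittleO_log_rpow_atTop (r := 1/2) (by norm_num)).tendsto_div_nhds_zero
    simpa only [Real.sqrt_eq_rpow] using this
  exact h1.comp LL_tendsto

theorem const_div_sqrt (C : ℝ) : Tendsto (fun x => C / √(LL x)) atTop (𝓝 0) :=
  tendsto_const_nhds.div_atTop (Real.tendsto_sqrt_atTop.comp LL_tendsto)

theorem LLyy {x : ℝ} (h1 : 1 < Real.log x) : LL (yy x) = LL x - Real.log (LL x) := by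
  have h2 : 0 < LL x := Real.log_pos h1
  rw [LL, yy, Real.log_exp, Real.log_div (by linarith) h2.ne', LL]

theorem M_bounds : ∃ C : ℝ, ∀ᶠ x in atTop,
    LL x - Real.log (LL x) - C ≤ Msum K (yy x) ∧ Msum K (yy x) ≤ LL x + C ∧
      Msum K x ≤ LL x + Real.log (LL x) + C := by
  obtain ⟨C1, h1⟩ := mertens_lower K
  obtain ⟨C2, h2⟩ := mertens_upper K
  refine ⟨max C1 C2, ?_⟩
  filter_upwards [yy_tendsto.eventually h1, yy_tendsto.eventually h2, h2,
    Real.tendsto_log_atTop.eventually_gt_atTop 1, (LL_tendsto.comp yy_tendsto).eventually_gt_atTop 0,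
    LL_tendsto.eventually_gt_atTop 1]
    with x a b c d e f
  rw [← LL, LLyy d] at a b
  rw [← LL] at c
  simp only [Function.comp_apply] at e
  rw [LLyy d] at e
  have h3 : Real.log (LL x - Real.log (LL x)) ≤ Real.log (LL x) :=
    Real.log_le_log e (by linarith [Real.log_pos f])
  refine ⟨?_, ?_, ?_⟩ <;> linarith [le_max_left C1 C2, le_max_right C1 C2]

theorem DM : Tendsto (fun x => (Msum K (yy x) - LL x) / √(LL x)) atTop (𝓝 0) := by
  obtain ⟨C, h⟩ := M_bounds K
  have hlo : Tendsto (fun x => -(Real.log (LL x) / √(LL x)) - C / √(LL x)) atTop (𝓝 0) := by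
    simpa using (log_div_sqrt.neg).sub (const_div_sqrt C)
  refine tendsto_of_tendsto_of_tendsto_of_le_of_le' hlo (const_div_sqrt C) ?_ ?_
  · filter_upwards [h] with x hx
    rw [← neg_div, ← sub_div]
    refine div_le_div_of_nonneg_right ?_ (Real.sqrt_nonneg _)
    linarith
  · filter_upwards [h] with x hx
    gcongr
    linarith

theorem DM2 : Tendsto (fun x => (Msum K x - Msum K (yy x)) / √(LL x)) atTop (𝓝 0) := by
  obtain ⟨C, h⟩ := M_bounds K
  have hhi : Tendsto (fun x => 2 * (Real.log (LL x) / √(LL x)) + 2 * (C / √(LL x))) atTop (𝓝 0) := by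
    simpa using (log_div_sqrt.const_mul 2).add ((const_div_sqrt C).const_mul 2)
  refine tendsto_of_tendsto_of_tendsto_of_le_of_le' tendsto_const_nhds hhi ?_ ?_
  · filter_upwards [LL_tendsto.eventually_ge_atTop 1, Real.tendsto_log_atTop.eventually_ge_atTop 1,
      eventually_gt_atTop 0] with x hx hx2 hx0
    refine div_nonneg ?_ (Real.sqrt_nonneg _)
    rw [sub_nonneg, Msum, Msum]
    refine Finset.sum_le_sum_of_subset_of_nonneg ?_ fun _ _ _ => by positivity
    intro p hp
    rw [mem_primesLE] at hp ⊢
    refine ⟨hp.1, hp.2.trans ?_⟩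
    rw [yy]
    calc _ ≤ Real.exp (Real.log x) := Real.exp_le_exp.mpr (div_le_self (by linarith) hx)
      _ = x := Real.exp_log hx0
  · filter_upwards [h] with x hx
    rw [mul_div_assoc', mul_div_assoc', ← add_div]
    gcongr
    linarith

theorem afac_bounds {p : Ideal (𝓞 K)} (hp : Prime p) {h : ℕ} (hh : 2 ≤ h) :
    0 ≤ afac h p ∧ afac h p ≤ (absNorm p : ℝ)⁻¹ ∧ |afac h p - (absNorm p : ℝ)⁻¹| ≤ 2 * ((absNorm p : ℝ)⁻¹)^2 := by
  obtain ⟨a, b, c, d, e⟩ := u_bounds hp hh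
  rw [afac]
  set v := ((absNorm p : ℝ)⁻¹)^h
  set u := (absNorm p : ℝ)⁻¹
  have h1 : 0 < 1 - v := by linarith
  refine ⟨div_nonneg (by nlinarith) h1.le, ?_, ?_⟩
  · rw [div_le_iff₀ h1]; nlinarith
  · have : (u - v) / (1 - v) - u = - (v * (1 - u) / (1 - v)) := by field_simp; ring
    rw [this, abs_neg, abs_of_nonneg (div_nonneg (mul_nonneg e.le (by linarith)) h1.le), div_le_iff₀ h1]
    nlinarith [mul_nonneg e.le a.le, mul_nonneg (sq_nonneg u) (by linarith : 0 ≤ 1 - 4 * v)]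

/-- sum of a_p -/
def Af (h : ℕ) (y : ℝ) : ℝ := ∑ p ∈ primesLE K y, afac h p

theorem DA (h : ℕ) (hh : 2 ≤ h) : Tendsto (fun x => (Af K h (yy x) - LL x) / √(LL x)) atTop (𝓝 0) := by
  obtain ⟨C2, hC2, h2⟩ := sum_inv_sq K
  have h3 : ∀ y, |Af K h y - Msum K y| ≤ 2 * C2 := by
    intro y
    rw [Af, Msum, ← Finset.sum_sub_distrib]
    refine (Finset.abs_sum_le_sum_abs _ _).trans ?_
    calc _ ≤ ∑ p ∈ primesLE K y, 2 * ((absNorm p : ℝ)⁻¹)^2 :=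
          Finset.sum_le_sum fun p hp => (afac_bounds K (mem_primesLE.mp hp).1 hh).2.2
      _ ≤ _ := by
          rw [← Finset.mul_sum]
          gcongr
          exact h2 _ fun m hm => (mem_primesLE.mp hm).1.ne_zero
  have h4 : Tendsto (fun x => (Af K h (yy x) - Msum K (yy x)) / √(LL x)) atTop (𝓝 0) := by
    refine squeeze_zero_norm (fun x => ?_) (const_div_sqrt (2 * C2))
    rw [norm_div, Real.norm_eq_abs, Real.norm_eq_abs, abs_of_nonneg (Real.sqrt_nonneg _)]
    gcongr
    exact h3 _
  have := h4.add (DM K)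
  rw [add_zero] at this
  refine this.congr fun x => ?_
  ring

theorem ratio_of_diff (f : ℝ → ℝ) (hf : Tendsto (fun x => (f x - LL x) / √(LL x)) atTop (𝓝 0)) :
    Tendsto (fun x => f x / LL x) atTop (𝓝 1) := by
  have := (hf.mul (const_div_sqrt 1)).add_const 1
  simp only [mul_zero, zero_add] at this
  refine this.congr' ?_
  filter_upwards [LL_tendsto.eventually_gt_atTop 0] with x hx
  have h1 : √(LL x) * √(LL x) = LL x := Real.mul_self_sqrt hx.le
  have h2 : 0 < √(LL x) := Real.sqrt_pos.mpr hx
  calc (f x - LL x) / √(LL x) * (1 / √(LL x)) + 1 = (f x - LL x) / (√(LL x) * √(LL x)) + 1 := by field_simp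
    _ = f x / LL x := by rw [h1]; field_simp; ring

theorem norm_prod_sub_prod {ι : Type*} (s : Finset ι) (f g : ι → ℂ) (hf : ∀ i ∈ s, ‖f i‖ ≤ 1)
    (hg : ∀ i ∈ s, ‖g i‖ ≤ 1) : ‖∏ i ∈ s, f i - ∏ i ∈ s, g i‖ ≤ ∑ i ∈ s, ‖f i - g i‖ := by
  classical
  induction s using Finset.induction_on with
  | empty => simp
  | insert a s ha ih =>
    rw [Finset.prod_insert ha, Finset.prod_insert ha, Finset.sum_insert ha]
    have ih' := ih (fun i hi => hf i (Finset.mem_insert_of_mem hi)) (fun i hi => hg i (Finset.mem_insert_of_mem hi))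
    have h1 : f a * ∏ i ∈ s, f i - g a * ∏ i ∈ s, g i =
        (f a - g a) * ∏ i ∈ s, f i + g a * (∏ i ∈ s, f i - ∏ i ∈ s, g i) := by ring
    rw [h1]
    refine (norm_add_le _ _).trans ?_
    rw [norm_mul, norm_mul]
    have h2 : ‖∏ i ∈ s, f i‖ ≤ 1 := by
      rw [norm_prod]
      exact Finset.prod_le_one (fun _ _ => norm_nonneg _) fun i hi => hf i (Finset.mem_insert_of_mem hi)
    have h3 := hg a (Finset.mem_insert_self _ _)
    have h4 := mul_le_mul_of_nonneg_left h2 (norm_nonneg (f a - g a))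
    have h5 := mul_le_mul_of_nonneg_right h3 (norm_nonneg (∏ i ∈ s, f i - ∏ i ∈ s, g i))
    linarith

end EK

namespace EK
open scoped Pointwise
open NumberField Ideal


/-- unit complex number -/
def zt (t x : ℝ) : ℂ := Complex.exp (Complex.I * ((t / √(LL x) : ℝ) : ℂ))

theorem zt_norm (t x : ℝ) : ‖zt t x‖ = 1 := by
  rw [zt, mul_comm, Complex.norm_exp_ofReal_mul_I]

theorem zt_sub (t x : ℝ) : ‖zt t x - 1‖ ≤ |t| / √(LL x) := by
  refine (Real.norm_exp_I_mul_ofReal_sub_one_le).trans ?_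
  rw [Real.norm_eq_abs, abs_div, abs_of_nonneg (Real.sqrt_nonneg _)]

theorem zt_sub_tendsto (t : ℝ) : Tendsto (fun x => ‖zt t x - 1‖) atTop (𝓝 0) :=
  squeeze_zero (fun _ => norm_nonneg _) (fun x => zt_sub t x) (const_div_sqrt |t|)

theorem Msum_nonneg (y : ℝ) : 0 ≤ Msum K y := Finset.sum_nonneg fun _ _ => by positivity

theorem err1 (t : ℝ) : Tendsto (fun x : ℝ => x ^ (-(LL x / Real.log x)) *
    Real.exp (‖zt t x - 1‖ * (yy x ^ (LL x / Real.log x) * Msum K (yy x)))) atTop (𝓝 0) := by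
  have hM := ratio_of_diff _ (DM K)
  have h1 : Tendsto (fun x => -1 + (|t| * Real.exp 1) / √(LL x) * (Msum K (yy x) / LL x)) atTop (𝓝 (-1)) := by
    simpa using ((const_div_sqrt (|t| * Real.exp 1)).mul hM).const_add (-1)
  have h2 := Real.tendsto_exp_atBot.comp (LL_tendsto.atTop_mul_neg (by norm_num) h1)
  refine squeeze_zero' ?_ ?_ h2
  · filter_upwards [eventually_ge_atTop 0] with x hx
    positivity
  · filter_upwards [eventually_gt_atTop 0, LL_tendsto.eventually_gt_atTop 0,
      Real.tendsto_log_atTop.eventually_gt_atTop 0] with x hx hL hl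
    rw [Real.rpow_def_of_pos hx, yy, ← Real.exp_mul]
    have e1 : Real.log x * -(LL x / Real.log x) = - LL x := by field_simp
    have e2 : Real.log x / LL x * (LL x / Real.log x) = 1 := by field_simp
    rw [e1, e2, ← Real.exp_add, Function.comp_apply]
    apply Real.exp_le_exp.mpr
    have h3 := mul_le_mul_of_nonneg_right (zt_sub t x)
      (mul_nonneg (Real.exp_pos 1).le (Msum_nonneg K (yy x)))
    rw [← yy]
    calc _ ≤ -LL x + |t| / √(LL x) * (Real.exp 1 * Msum K (yy x)) := by linarith
      _ = _ := by
        have := Real.sqrt_pos.mpr hL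
        field_simp

theorem err2 : Tendsto (fun x : ℝ => yy x ^ (-(1/2) : ℝ)) atTop (𝓝 0) :=
  (tendsto_rpow_neg_atTop (by norm_num)).comp yy_tendsto

theorem LL_div_log : Tendsto (fun x => LL x / Real.log x) atTop (𝓝 0) := by
  refine (logyy_tendsto.inv_tendsto_atTop).congr fun x => ?_
  simp

theorem norm_one_add_le (z : ℂ) (hz : ‖z‖ = 1) (a : ℝ) (h0 : 0 ≤ a) (h1 : a ≤ 1) : ‖1 + (z - 1) * (a:ℂ)‖ ≤ 1 := by
  have : 1 + (z - 1) * (a:ℂ) = ((1 - a : ℝ) : ℂ) + z * (a : ℂ) := by push_cast; ring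
  rw [this]
  refine (norm_add_le _ _).trans ?_
  rw [norm_mul, hz, Complex.norm_real, Complex.norm_real, Real.norm_of_nonneg h0, Real.norm_of_nonneg (by linarith)]
  linarith

theorem norm_exp_le (z : ℂ) (hz : ‖z‖ = 1) (a : ℝ) (h0 : 0 ≤ a) : ‖Complex.exp ((z - 1) * (a:ℂ))‖ ≤ 1 := by
  rw [Complex.norm_exp]
  apply Real.exp_le_one_iff.mpr
  have : z.re ≤ 1 := (Complex.re_le_norm z).trans hz.le
  simp
  nlinarith

theorem prod_exp (h : ℕ) (hh : 2 ≤ h) : ∃ C : ℝ, ∀ (z : ℂ) (y : ℝ), ‖z‖ = 1 → ‖z - 1‖ ≤ 1 →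
    ‖∏ p ∈ primesLE K y, (1 + (z - 1) * (afac h p : ℝ)) - Complex.exp ((z - 1) * (Af K h y : ℝ))‖ ≤
      C * ‖z - 1‖ := by
  obtain ⟨C2, hC2, h2⟩ := sum_inv_sq K
  refine ⟨C2, fun z y hz hz1 => ?_⟩
  rw [Af, Complex.ofReal_sum, Finset.mul_sum, Complex.exp_sum]
  have hb : ∀ p ∈ primesLE K y, 0 ≤ afac h p ∧ afac h p ≤ (absNorm p : ℝ)⁻¹ ∧ afac h p ≤ 1 := by
    intro p hp
    have hp' := (mem_primesLE.mp hp).1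
    obtain ⟨a, b, _⟩ := afac_bounds K hp' hh
    have := (u_bounds hp' hh).2.1
    exact ⟨a, b, by linarith⟩
  refine (norm_prod_sub_prod _ _ _ ?_ ?_).trans ?_
  · intro p hp
    exact norm_one_add_le z hz _ (hb p hp).1 (hb p hp).2.2
  · intro p hp
    exact norm_exp_le z hz _ (hb p hp).1
  · calc _ ≤ ∑ p ∈ primesLE K y, ((absNorm p : ℝ)⁻¹)^2 * ‖z - 1‖ := by
          refine Finset.sum_le_sum fun p hp => ?_
          obtain ⟨a, b, c⟩ := hb p hp
          have e : ‖(z - 1) * (afac h p : ℂ)‖ = ‖z - 1‖ * afac h p := by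
            rw [norm_mul, Complex.norm_real, Real.norm_of_nonneg a]
          have h3 := Complex.norm_exp_sub_one_sub_id_le (x := (z - 1) * (afac h p : ℂ)) (by
            rw [e]; nlinarith [norm_nonneg (z - 1)])
          rw [norm_sub_rev]
          rw [sub_sub] at h3
          refine h3.trans ?_
          rw [e, mul_pow, mul_comm]
          have h5 : ‖z - 1‖^2 ≤ ‖z - 1‖ := by nlinarith [norm_nonneg (z - 1)]
          gcongr
      _ ≤ C2 * ‖z - 1‖ := by
          rw [← Finset.sum_mul]
          gcongr
          exact h2 _ fun m hm => (mem_primesLE.mp hm).1.ne_zero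

theorem exponent_lim (h : ℕ) (hh : 2 ≤ h) (t : ℝ) :
    Tendsto (fun x => (zt t x - 1) * (Af K h (yy x) : ℝ) - Complex.I * ((t * √(LL x) : ℝ) : ℂ)) atTop
      (𝓝 (-(t^2/2 : ℝ) : ℂ)) := by
  have hR := ratio_of_diff _ (DA K h hh)
  have hD := DA K h hh
  have h1 : Tendsto (fun x => Complex.I * ((t * ((Af K h (yy x) - LL x) / √(LL x)) : ℝ) : ℂ)) atTop (𝓝 0) := by
    have := (Complex.continuous_ofReal.tendsto _).comp (hD.const_mul t)
    simpa using this.const_mul Complex.I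
  have h2 : Tendsto (fun x => ((-(t^2/2) * (Af K h (yy x) / LL x) : ℝ) : ℂ)) atTop (𝓝 (-(t^2/2 : ℝ) : ℂ)) := by
    have := (Complex.continuous_ofReal.tendsto _).comp (hR.const_mul (-(t^2/2)))
    rw [mul_one, Complex.ofReal_neg] at this
    exact this
  have h3 : Tendsto (fun x => (zt t x - 1 - Complex.I * ((t / √(LL x) : ℝ) : ℂ) +
      ((t / √(LL x) : ℝ) : ℂ)^2 / 2) * (Af K h (yy x) : ℝ)) atTop (𝓝 0) := by
    have h4 : Tendsto (fun x => |t|^3 / √(LL x) * |Af K h (yy x) / LL x|) atTop (𝓝 0) := by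
      simpa using (const_div_sqrt (|t|^3)).mul hR.abs
    refine squeeze_zero_norm' ?_ h4
    have hs : Tendsto (fun x => |t| / √(LL x)) atTop (𝓝 0) := const_div_sqrt |t|
    filter_upwards [LL_tendsto.eventually_gt_atTop 0, hs.eventually (eventually_le_nhds (by norm_num : (0:ℝ) < 1))] with x hL hx
    have hn : ‖Complex.I * ((t / √(LL x) : ℝ) : ℂ)‖ = |t| / √(LL x) := by
      rw [norm_mul, Complex.norm_I, one_mul, Complex.norm_real, Real.norm_eq_abs, abs_div, abs_of_nonneg (Real.sqrt_nonneg _)]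
    have hb := Complex.exp_bound (x := Complex.I * ((t / √(LL x) : ℝ) : ℂ)) (by rw [hn]; exact hx) (n := 3) (by norm_num)
    rw [hn] at hb
    have e : zt t x - 1 - Complex.I * ((t / √(LL x) : ℝ) : ℂ) + ((t / √(LL x) : ℝ) : ℂ)^2 / 2 =
        Complex.exp (Complex.I * ((t / √(LL x) : ℝ) : ℂ)) -
          ∑ m ∈ Finset.range 3, (Complex.I * ((t / √(LL x) : ℝ) : ℂ)) ^ m / (m.factorial : ℂ) := by
      rw [zt]
      simp [Finset.sum_range_succ, mul_pow, Nat.factorial]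
      ring
    rw [norm_mul, e, Complex.norm_real, Real.norm_eq_abs]
    have hsq := Real.sqrt_pos.mpr hL
    have hsq2 : √(LL x) ^ 2 = LL x := Real.sq_sqrt hL.le
    calc _ ≤ (|t| / √(LL x))^3 * 1 * |Af K h (yy x)| := by
          gcongr
          refine hb.trans ?_
          gcongr
          norm_num [Nat.factorial]
      _ = |t|^3 / √(LL x) * |Af K h (yy x) / LL x| := by
          rw [abs_div, abs_of_pos hL, div_pow]
          have : √(LL x) ^ 3 = √(LL x) * LL x := by rw [pow_succ', hsq2]
          rw [this]
          field_simp
  have h5 := (h3.add h1).add h2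
  rw [zero_add, zero_add] at h5
  refine h5.congr' ?_
  filter_upwards [LL_tendsto.eventually_gt_atTop 0] with x hL
  have hsq := Real.sqrt_pos.mpr hL
  obtain ⟨s, hs⟩ : ∃ s, √(LL x) = s := ⟨_, rfl⟩
  have hsq2 : LL x = s^2 := by rw [← hs, Real.sq_sqrt hL.le]
  rw [hs] at hsq ⊢
  rw [hsq2]
  have hsc : (s : ℂ) ≠ 0 := by exact_mod_cast hsq.ne'
  push_cast
  field_simp
  ring

theorem char_lim0 (h : ℕ) (hh : 2 ≤ h) : ∃ κ : ℝ, 0 < κ ∧ ∀ t : ℝ,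
    Tendsto (fun x => (∑ m ∈ HF K h x, zt t x ^ omP (primesLE K (yy x)) m) /
      ((κ * x * A1 K h (yy x) : ℝ) : ℂ) * Complex.exp (-(Complex.I * ((t * √(LL x) : ℝ) : ℂ)))) atTop
      (𝓝 (Complex.exp (-(t^2/2 : ℝ) : ℂ))) := by
  obtain ⟨κ, C, c0, hκ, hC, hc0, H⟩ := approx_static K h hh
  obtain ⟨C', H'⟩ := prod_exp K h hh
  refine ⟨κ, hκ, fun t => ?_⟩
  have h1 : Tendsto (fun x => (∑ m ∈ HF K h x, zt t x ^ omP (primesLE K (yy x)) m) /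
      ((κ * x * A1 K h (yy x) : ℝ) : ℂ) - Complex.exp ((zt t x - 1) * (Af K h (yy x) : ℝ))) atTop (𝓝 0) := by
    have hb : Tendsto (fun x => C * (yy x ^ (-(1/2) : ℝ) + x ^ (-(LL x / Real.log x)) *
      Real.exp (‖zt t x - 1‖ * (yy x ^ (LL x / Real.log x) * Msum K (yy x)))) + C' * ‖zt t x - 1‖) atTop (𝓝 0) := by
      simpa using ((err2.add (err1 K t)).const_mul C).add ((zt_sub_tendsto t).const_mul C')
    refine squeeze_zero_norm' ?_ hb
    filter_upwards [eventually_ge_atTop 1, yy_tendsto.eventually_ge_atTop 1,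
      LL_tendsto.eventually_ge_atTop 0, Real.tendsto_log_atTop.eventually_ge_atTop 0,
      LL_div_log.eventually (eventually_le_nhds hc0), (zt_sub_tendsto t).eventually (eventually_le_nhds one_pos)]
      with x hx hy hL hl hc hz
    have a1 := H (zt t x) x (yy x) (LL x / Real.log x) (zt_norm t x).le hx hy (div_nonneg hL hl) hc
    have a2 := H' (zt t x) (yy x) (zt_norm t x) hz
    refine (norm_sub_le_norm_sub_add_norm_sub _ _ _).trans (add_le_add a1 a2)
  have h2 : Tendsto (fun x => ((∑ m ∈ HF K h x, zt t x ^ omP (primesLE K (yy x)) m) /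
      ((κ * x * A1 K h (yy x) : ℝ) : ℂ) - Complex.exp ((zt t x - 1) * (Af K h (yy x) : ℝ))) *
        Complex.exp (-(Complex.I * ((t * √(LL x) : ℝ) : ℂ)))) atTop (𝓝 0) := by
    refine squeeze_zero_norm (fun x => ?_) (tendsto_zero_iff_norm_tendsto_zero.mp h1)
    rw [norm_mul]
    have : ‖Complex.exp (-(Complex.I * ((t * √(LL x) : ℝ) : ℂ)))‖ = 1 := by
      rw [show -(Complex.I * ((t * √(LL x) : ℝ) : ℂ)) = ((-(t * √(LL x)) : ℝ) : ℂ) * Complex.I by push_cast; ring]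
      exact Complex.norm_exp_ofReal_mul_I _
    rw [this, mul_one]
  have h3 := h2.add ((Complex.continuous_exp.tendsto _).comp (exponent_lim K h hh t))
  rw [zero_add] at h3
  refine h3.congr fun x => ?_
  rw [Function.comp_apply, sub_mul, ← Complex.exp_add, ← sub_eq_add_neg, sub_add_cancel]

theorem card_lim (h : ℕ) (hh : 2 ≤ h) : ∃ c : ℝ, 0 < c ∧ (∀ᶠ x in atTop, c * x ≤ ((HF K h x).card : ℝ)) ∧
    ∀ t : ℝ, Tendsto (fun x => (((HF K h x).card : ℝ) : ℂ)⁻¹ * ∑ m ∈ HF K h x,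
      Complex.exp (((t * (((omP (primesLE K (yy x)) m : ℝ) - LL x) / √(LL x)) : ℝ) : ℂ) * Complex.I)) atTop
      (𝓝 (Complex.exp (-(t^2/2 : ℝ) : ℂ))) := by
  obtain ⟨κ, hκ, H⟩ := char_lim0 K h hh
  obtain ⟨c1, hc1, hA⟩ := A1_ge K
  have h0 : Tendsto (fun x => (((HF K h x).card : ℝ) : ℂ) / ((κ * x * A1 K h (yy x) : ℝ) : ℂ)) atTop (𝓝 1) := by
    have := H 0
    simp [zt] at this
    simpa using this
  have h0' : Tendsto (fun x => ((HF K h x).card : ℝ) / (κ * x * A1 K h (yy x))) atTop (𝓝 1) := by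
    have := (Complex.continuous_re.tendsto _).comp h0
    refine (this.congr fun x => ?_)
    rw [Function.comp_apply, ← Complex.ofReal_div, Complex.ofReal_re]
  refine ⟨κ * c1 / 2, by positivity, ?_, ?_⟩
  · filter_upwards [h0'.eventually (eventually_ge_nhds (by norm_num : (1/2:ℝ) < 1)), eventually_gt_atTop 0] with x hx hx0
    have hA' := hA h hh (yy x)
    have hApos : 0 < A1 K h (yy x) := lt_of_lt_of_le hc1 hA'
    rw [le_div_iff₀ (by positivity)] at hx
    refine le_trans ?_ hx
    have : κ * x * c1 ≤ κ * x * A1 K h (yy x) := by gcongr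
    linarith
  · intro t
    have h1 := (H t).div h0 one_ne_zero
    rw [div_one] at h1
    refine h1.congr' ?_
    filter_upwards [eventually_gt_atTop 0, LL_tendsto.eventually_gt_atTop 0] with x hx0 hL
    have hApos : 0 < A1 K h (yy x) := lt_of_lt_of_le hc1 (hA h hh (yy x))
    have hden : ((κ * x * A1 K h (yy x) : ℝ) : ℂ) ≠ 0 := by
      exact_mod_cast (by positivity : (κ * x * A1 K h (yy x) : ℝ) ≠ 0)
    have hsq := Real.sqrt_pos.mpr hL
    have e : ∀ m ∈ HF K h x, Complex.exp (((t * (((omP (primesLE K (yy x)) m : ℝ) - LL x) / √(LL x)) : ℝ) : ℂ) * Complex.I)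
        = zt t x ^ omP (primesLE K (yy x)) m * Complex.exp (-(Complex.I * ((t * √(LL x) : ℝ) : ℂ))) := by
      intro m _
      rw [zt, ← Complex.exp_nat_mul, ← Complex.exp_add]
      congr 1
      obtain ⟨s, hs⟩ : ∃ s, √(LL x) = s := ⟨_, rfl⟩
      have hsq2 : LL x = s^2 := by rw [← hs, Real.sq_sqrt hL.le]
      rw [hs] at hsq ⊢
      rw [hsq2]
      have hsc : (s : ℂ) ≠ 0 := by exact_mod_cast hsq.ne'
      push_cast
      field_simp
      ring
    rw [Finset.sum_congr rfl e, ← Finset.sum_mul]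
    rw [Pi.div_apply, div_mul_eq_mul_div, div_div_div_cancel_right₀ hden, div_eq_inv_mul]

end EK

namespace EK
open scoped Pointwise
open NumberField Ideal ProbabilityTheory


/-- Gaussian cdf -/
def Gp (γ : ℝ) : ℝ := (gaussianReal 0 1).real (Set.Iic γ)

theorem Gp_eq (γ : ℝ) : Gp γ = (√(2 * Real.pi))⁻¹ * ∫ u in Set.Iic γ, Real.exp (-u ^ 2 / 2) := by
  rw [Gp, Measure.real, gaussianReal_apply_eq_integral _ one_ne_zero, ENNReal.toReal_ofReal
    (integral_nonneg fun x => gaussianPDFReal_nonneg _ _ _), ← integral_const_mul]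
  simp [gaussianPDFReal]

theorem Gp_cont : Continuous Gp := by
  have hi : Integrable (gaussianPDFReal 0 1) := integrable_gaussianPDFReal 0 1
  have h : ∀ γ, Gp γ = (∫ u in Set.Iic 0, gaussianPDFReal 0 1 u) + ∫ u in (0:ℝ)..γ, gaussianPDFReal 0 1 u := by
    intro γ
    rw [Gp, Measure.real, gaussianReal_apply_eq_integral _ one_ne_zero, ENNReal.toReal_ofReal
      (integral_nonneg fun x => gaussianPDFReal_nonneg _ _ _)]
    have := intervalIntegral.integral_Iic_sub_Iic (μ := volume) (f := gaussianPDFReal 0 1) (a := 0) (b := γ) hi.integrableOn hi.integrableOn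
    linarith
  rw [show Gp = fun γ => _ from funext h]
  exact continuous_const.add (intervalIntegral.continuous_primitive (fun a b => hi.intervalIntegrable) 0)

/-- empirical measure -/
def emp {α : Type*} (S : Finset α) (X : α → ℝ) : Measure ℝ :=
  (S.card : ENNReal)⁻¹ • ∑ m ∈ S, Measure.dirac (X m)

theorem emp_prob {α : Type*} (S : Finset α) (X : α → ℝ) (hS : S.Nonempty) : IsProbabilityMeasure (emp S X) := by
  refine ⟨?_⟩
  have h0 : (S.card : ENNReal) ≠ 0 := by
    simpa using hS.ne_empty
  simp [emp, ENNReal.inv_mul_cancel h0 (ENNReal.natCast_ne_top _)]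

theorem emp_charFun {α : Type*} (S : Finset α) (X : α → ℝ) (t : ℝ) :
    charFun (emp S X) t = ((S.card : ℝ) : ℂ)⁻¹ * ∑ m ∈ S, Complex.exp (((t * X m : ℝ) : ℂ) * Complex.I) := by
  rw [charFun_apply_real, emp, integral_smul_measure, integral_finsetSum_measure]
  · simp
  · intro i _
    exact integrable_dirac (by simp)

open scoped Classical in
theorem emp_Iic {α : Type*} (S : Finset α) (X : α → ℝ) (γ : ℝ) :
    (emp S X).real (Set.Iic γ) = ((S.filter (fun m => X m ≤ γ)).card : ℝ) / S.card := by
  rw [Measure.real, emp]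
  simp only [Measure.smul_apply, Measure.finsetSum_apply, smul_eq_mul, ENNReal.toReal_mul,
    Measure.dirac_apply' _ measurableSet_Iic, Set.indicator_apply, Set.mem_Iic, Pi.one_apply]
  rw [Finset.sum_boole]
  simp [div_eq_inv_mul]

open scoped Classical in
theorem cdf_seq {α : Type*} (S : ℕ → Finset α) (X : ℕ → α → ℝ) (hS : ∀ n, (S n).Nonempty)
    (H : ∀ t : ℝ, Tendsto (fun n => (((S n).card : ℝ) : ℂ)⁻¹ * ∑ m ∈ S n,
      Complex.exp (((t * X n m : ℝ) : ℂ) * Complex.I)) atTop (𝓝 (Complex.exp (-(t^2/2 : ℝ) : ℂ)))) (γ : ℝ) :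
    Tendsto (fun n => (((S n).filter (fun m => X n m ≤ γ)).card : ℝ) / (S n).card) atTop (𝓝 (Gp γ)) := by
  let μ : ℕ → ProbabilityMeasure ℝ := fun n => ⟨emp (S n) (X n), emp_prob _ _ (hS n)⟩
  let μ0 : ProbabilityMeasure ℝ := ⟨gaussianReal 0 1, inferInstance⟩
  have h1 : Tendsto μ atTop (𝓝 μ0) := by
    refine ProbabilityMeasure.tendsto_iff_tendsto_charFun.2 fun t => ?_
    have h2 : charFun (μ0 : Measure ℝ) t = Complex.exp (-(t^2/2 : ℝ) : ℂ) := by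
      change charFun (gaussianReal 0 1) t = _
      rw [charFun_gaussianReal]
      congr 1
      push_cast
      ring
    rw [h2]
    refine (H t).congr fun n => ?_
    exact (emp_charFun (S n) (X n) t).symm
  have h3 := ProbabilityMeasure.tendsto_measure_of_null_frontier_of_tendsto' h1 (E := Set.Iic γ) (by
    change gaussianReal 0 1 _ = 0
    rw [frontier_Iic]
    haveI := nullSingletonClass_gaussianReal (μ := 0) (v := 1) one_ne_zero
    exact measure_singleton γ)
  have h4 := (ENNReal.tendsto_toReal (measure_ne_top _ _)).comp h3
  refine h4.congr fun n => ?_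
  exact emp_Iic (S n) (X n) γ

variable {K} in
theorem mem_HF {h : ℕ} {x : ℝ} {m : Ideal (𝓞 K)} : m ∈ HF K h x ↔ (m ≠ 0 ∧ (absNorm m : ℝ) ≤ x) ∧ HFr h m := by
  classical
  rw [HF, Finset.mem_filter, mem_ideals]

open scoped Classical in
theorem cdf_lim (h : ℕ) (hh : 2 ≤ h) (γ : ℝ) :
    Tendsto (fun x => (((HF K h x).filter (fun m =>
      ((omP (primesLE K (yy x)) m : ℝ) - LL x) / √(LL x) ≤ γ)).card : ℝ) / (HF K h x).card) atTop (𝓝 (Gp γ)) := by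
  obtain ⟨c, hc, hev, H⟩ := card_lim K h hh
  apply tendsto_of_seq_tendsto
  intro u hu
  have hne : ∀ᶠ n in atTop, (HF K h (u n)).Nonempty := by
    filter_upwards [hu.eventually hev, hu.eventually_gt_atTop 0] with n hn hn0
    rw [← Finset.card_pos]
    have : 0 < ((HF K h (u n)).card : ℝ) := lt_of_lt_of_le (by positivity) hn
    exact_mod_cast this
  obtain ⟨N, hN⟩ := eventually_atTop.mp hne
  rw [← tendsto_add_atTop_iff_nat N]
  exact cdf_seq (fun n => HF K h (u (n + N)))
    (fun n m => ((omP (primesLE K (yy (u (n + N)))) m : ℝ) - LL (u (n + N))) / √(LL (u (n + N))))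
    (fun n => hN _ (Nat.le_add_left _ _))
    (fun t => ((H t).comp hu).comp (tendsto_add_atTop_nat N)) γ

end EK

namespace EK
open scoped Pointwise
open NumberField Ideal ProbabilityTheory


open scoped Classical in
/-- exceptional set -/
def ExS (h : ℕ) (ε x : ℝ) : Finset (Ideal (𝓞 K)) :=
  (HF K h x).filter (fun m => (absNorm m : ℝ) < √x) ∪
  (HF K h x).filter (fun m => ε * √(LL x) ≤ (omP (primesLE K x) m : ℝ) - (omP (primesLE K (yy x)) m : ℝ))

open scoped Classical in
theorem omP_sub {P Q : Finset (Ideal (𝓞 K))} (hPQ : P ⊆ Q) (m : Ideal (𝓞 K)) :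
    (omP Q m : ℝ) - (omP P m : ℝ) = ∑ p ∈ Q \ P, if p ∣ m then (1:ℝ) else 0 := by
  rw [omP, omP, Finset.card_filter, Finset.card_filter]
  push_cast
  rw [← Finset.sum_sdiff hPQ]
  ring

theorem HF_subset (h : ℕ) (x : ℝ) : HF K h x ⊆ ideals K x := by
  classical
  exact Finset.filter_subset _ _

open scoped Classical in
theorem sum_om : ∃ C : ℝ, 0 < C ∧ ∀ (h : ℕ) (x y : ℝ), 0 ≤ x → y ≤ x →
    ∑ m ∈ HF K h x, ((omP (primesLE K x) m : ℝ) - (omP (primesLE K y) m : ℝ)) ≤ C * x * (Msum K x - Msum K y) := by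
  obtain ⟨C, hC, hcount⟩ := count_le K
  refine ⟨C, hC, fun h x y hx hy => ?_⟩
  have hsub : primesLE K y ⊆ primesLE K x := by
    intro p hp
    rw [mem_primesLE] at hp ⊢
    exact ⟨hp.1, hp.2.trans hy⟩
  have hM : Msum K x - Msum K y = ∑ p ∈ primesLE K x \ primesLE K y, (absNorm p : ℝ)⁻¹ := by
    rw [Msum, Msum, ← Finset.sum_sdiff hsub]; ring
  rw [hM, Finset.mul_sum]
  simp_rw [omP_sub K hsub]
  rw [Finset.sum_comm]
  refine Finset.sum_le_sum fun p hp => ?_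
  have hp0 : p ≠ 0 := (mem_primesLE.mp (Finset.mem_sdiff.mp hp).1).1.ne_zero
  rw [Finset.sum_boole]
  calc (((HF K h x).filter (fun m => p ∣ m)).card : ℝ) ≤ ((idealsDvd K x p).card : ℝ) := by
        exact_mod_cast Finset.card_le_card (Finset.filter_subset_filter _ (HF_subset K h x))
    _ = ((ideals K (x / absNorm p)).card : ℝ) := by rw [card_idealsDvd K x p hp0]
    _ ≤ C * (x / absNorm p) := hcount _ (by positivity)
    _ = _ := by ring

theorem ExS_lim (h : ℕ) (hh : 2 ≤ h) {ε : ℝ} (hε : 0 < ε) :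
    Tendsto (fun x => ((ExS K h ε x).card : ℝ) / (HF K h x).card) atTop (𝓝 0) := by
  classical
  obtain ⟨C, hC, hcount⟩ := count_le K
  obtain ⟨C', hC', hsum⟩ := sum_om K
  obtain ⟨c, hc, hev, -⟩ := card_lim K h hh
  have hb : Tendsto (fun x => C / c * (√x)⁻¹ + C' / (ε * c) * ((Msum K x - Msum K (yy x)) / √(LL x))) atTop (𝓝 0) := by
    simpa using ((Real.tendsto_sqrt_atTop.inv_tendsto_atTop).const_mul (C / c)).add ((DM2 K).const_mul (C' / (ε * c)))
  refine squeeze_zero' (Eventually.of_forall fun x => by positivity) ?_ hb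
  filter_upwards [hev, eventually_gt_atTop 0, LL_tendsto.eventually_ge_atTop 1,
    Real.tendsto_log_atTop.eventually_ge_atTop 0] with x h1 hx hL hl
  have hyx : yy x ≤ x := by
    rw [yy]
    calc _ ≤ Real.exp (Real.log x) := Real.exp_le_exp.mpr (div_le_self (by linarith) hL)
      _ = x := Real.exp_log hx
  have hsL : 0 < √(LL x) := Real.sqrt_pos.mpr (by linarith)
  have hsx : 0 < √x := Real.sqrt_pos.mpr hx
  have hsub : primesLE K (yy x) ⊆ primesLE K x := by
    intro p hp
    rw [mem_primesLE] at hp ⊢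
    exact ⟨hp.1, hp.2.trans hyx⟩
  have c1 : (((HF K h x).filter (fun m => (absNorm m : ℝ) < √x)).card : ℝ) ≤ C * √x := by
    refine le_trans ?_ (hcount (√x) hsx.le)
    refine Nat.cast_le.mpr (Finset.card_le_card ?_)
    intro m hm
    rw [Finset.mem_filter, mem_HF] at hm
    exact mem_ideals.mpr ⟨hm.1.1.1, hm.2.le⟩
  have c2 : (((HF K h x).filter (fun m => ε * √(LL x) ≤ (omP (primesLE K x) m : ℝ) - (omP (primesLE K (yy x)) m : ℝ))).card : ℝ)
      ≤ C' * x * (Msum K x - Msum K (yy x)) / (ε * √(LL x)) := by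
    rw [le_div_iff₀ (by positivity)]
    refine le_trans ?_ (hsum h x (yy x) hx.le hyx)
    rw [← nsmul_eq_mul]
    refine (Finset.card_nsmul_le_sum _ _ _ fun m hm => (Finset.mem_filter.mp hm).2).trans ?_
    refine Finset.sum_le_sum_of_subset_of_nonneg (Finset.filter_subset _ _) fun m _ _ => ?_
    rw [omP_sub K hsub]
    exact Finset.sum_nonneg fun _ _ => by split_ifs <;> norm_num
  have c3 : ((ExS K h ε x).card : ℝ) ≤ C * √x + C' * x * (Msum K x - Msum K (yy x)) / (ε * √(LL x)) := by
    refine le_trans ?_ (add_le_add c1 c2)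
    rw [ExS]
    exact_mod_cast Finset.card_union_le _ _
  calc ((ExS K h ε x).card : ℝ) / (HF K h x).card ≤ ((ExS K h ε x).card : ℝ) / (c * x) := by gcongr
    _ ≤ (C * √x + C' * x * (Msum K x - Msum K (yy x)) / (ε * √(LL x))) / (c * x) := by gcongr
    _ = _ := by
      have : x = √x * √x := (Real.mul_self_sqrt hx.le).symm
      rw [add_div]
      congr 1
      · rw [show C * √x / (c * x) = C * √x / (c * (√x * √x)) by rw [← this]]
        field_simp
      · field_simp

/-- the real-variable core of the transfer -/
theorem transfer {L l γ ε w wp : ℝ} (hL : 1 < L) (hl1 : L - 1 ≤ l) (hl2 : l ≤ L)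
    (hε : 1 + |γ| ≤ ε * √L) (hw1 : wp ≤ w) (hw2 : w - wp ≤ ε * √L) :
    ((w - l) / √l ≤ γ → (wp - L) / √L ≤ γ + 3 * ε) ∧ ((wp - L) / √L ≤ γ - 3 * ε → (w - l) / √l ≤ γ) := by
  have hl : 0 < l := by linarith
  have hsl := Real.sqrt_pos.mpr hl
  have hsL : 0 < √L := Real.sqrt_pos.mpr (by linarith)
  have h1 : √l ≤ √L := Real.sqrt_le_sqrt hl2
  have h2 : √L ≤ √l + 1 := by
    apply Real.sqrt_le_iff.mpr
    refine ⟨by positivity, ?_⟩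
    have := Real.sq_sqrt hl.le
    nlinarith
  have h3 : |γ * √l - γ * √L| ≤ |γ| := by
    rw [← mul_sub, abs_mul]
    refine mul_le_of_le_one_right (abs_nonneg _) ?_
    rw [abs_le]; constructor <;> linarith
  rw [abs_le] at h3
  have h0 := abs_nonneg γ
  rw [div_le_iff₀ hsl, div_le_iff₀ hsL, div_le_iff₀ hsL]
  constructor
  · intro h; nlinarith
  · intro h; nlinarith

open scoped Classical in
/-- The target set -/
def Bs (h : ℕ) (γ x : ℝ) : Finset (Ideal (𝓞 K)) :=
  (HF K h x).filter (fun m => 3 ≤ absNorm m ∧ ((omP (primesLE K x) m : ℝ) - LL (absNorm m)) / √(LL (absNorm m)) ≤ γ)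

open scoped Classical in
/-- The truncated set -/
def Ns (h : ℕ) (γ x : ℝ) : Finset (Ideal (𝓞 K)) :=
  (HF K h x).filter (fun m => ((omP (primesLE K (yy x)) m : ℝ) - LL x) / √(LL x) ≤ γ)

theorem sandwich (h : ℕ) (γ : ℝ) {ε : ℝ} (hε : 0 < ε) : ∀ᶠ x in atTop,
    ((Ns K h (γ - 3 * ε) x).card : ℝ) ≤ (Bs K h γ x).card + (ExS K h ε x).card ∧
    ((Bs K h γ x).card : ℝ) ≤ (Ns K h (γ + 3 * ε) x).card + (ExS K h ε x).card := by
  classical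
  filter_upwards [eventually_ge_atTop 9, LL_tendsto.eventually_gt_atTop 1,
    Real.tendsto_log_atTop.eventually_gt_atTop 0,
    (Real.tendsto_sqrt_atTop.comp LL_tendsto).eventually_ge_atTop ((1 + |γ|) / ε)] with x hx hL hl hs
  rw [Function.comp_apply, div_le_iff₀ hε, mul_comm] at hs
  have hyx : yy x ≤ x := by
    rw [yy]
    calc _ ≤ Real.exp (Real.log x) := Real.exp_le_exp.mpr (div_le_self (by linarith) hL.le)
      _ = x := Real.exp_log (by linarith)
  have hsub : primesLE K (yy x) ⊆ primesLE K x := by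
    intro p hp
    rw [mem_primesLE] at hp ⊢
    exact ⟨hp.1, hp.2.trans hyx⟩
  have key : ∀ m ∈ HF K h x, m ∉ ExS K h ε x → 3 ≤ absNorm m ∧
      ((((omP (primesLE K x) m : ℝ) - LL (absNorm m)) / √(LL (absNorm m)) ≤ γ →
        ((omP (primesLE K (yy x)) m : ℝ) - LL x) / √(LL x) ≤ γ + 3 * ε) ∧
      (((omP (primesLE K (yy x)) m : ℝ) - LL x) / √(LL x) ≤ γ - 3 * ε →
        ((omP (primesLE K x) m : ℝ) - LL (absNorm m)) / √(LL (absNorm m)) ≤ γ)) := by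
    intro m hm hE
    rw [ExS, Finset.mem_union, Finset.mem_filter, Finset.mem_filter] at hE
    push Not at hE
    have e1 := hE.1 hm
    have e2 := hE.2 hm
    have h3 : (3:ℝ) ≤ √x := Real.le_sqrt_of_sq_le (by linarith)
    have hN3 : (3:ℝ) ≤ absNorm m := h3.trans e1
    have hNx := (mem_HF.mp hm).1.2
    have hlN : Real.log x / 2 ≤ Real.log (absNorm m) := by
      rw [← Real.log_sqrt (by linarith)]
      exact Real.log_le_log (by linarith) e1
    have hlN0 : 0 < Real.log (absNorm m) := by linarith
    refine ⟨by exact_mod_cast hN3, ?_⟩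
    refine transfer hL ?_ ?_ hs ?_ e2.le
    · have : Real.log (Real.log x / 2) ≤ LL (absNorm m) := Real.log_le_log (by linarith) hlN
      rw [Real.log_div hl.ne' (by norm_num), ← LL] at this
      linarith [Real.log_two_lt_d9]
    · exact Real.log_le_log hlN0 (Real.log_le_log (by linarith) hNx)
    · rw [← sub_nonneg, omP_sub K hsub]
      exact Finset.sum_nonneg fun _ _ => by split_ifs <;> norm_num
  constructor
  · have : Ns K h (γ - 3 * ε) x ⊆ Bs K h γ x ∪ ExS K h ε x := by
      intro m hm
      rw [Ns, Finset.mem_filter] at hm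
      rw [Finset.mem_union]
      by_cases hE : m ∈ ExS K h ε x
      · exact Or.inr hE
      · left
        obtain ⟨a, _, b⟩ := key m hm.1 hE
        rw [Bs, Finset.mem_filter]
        exact ⟨hm.1, a, b hm.2⟩
    exact_mod_cast (Finset.card_le_card this).trans (Finset.card_union_le _ _)
  · have : Bs K h γ x ⊆ Ns K h (γ + 3 * ε) x ∪ ExS K h ε x := by
      intro m hm
      rw [Bs, Finset.mem_filter] at hm
      rw [Finset.mem_union]
      by_cases hE : m ∈ ExS K h ε x
      · exact Or.inr hE
      · left
        obtain ⟨a, b, _⟩ := key m hm.1 hE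
        rw [Ns, Finset.mem_filter]
        exact ⟨hm.1, b hm.2.2⟩
    exact_mod_cast (Finset.card_le_card this).trans (Finset.card_union_le _ _)

theorem main_lim (h : ℕ) (hh : 2 ≤ h) (γ : ℝ) :
    Tendsto (fun x => ((Bs K h γ x).card : ℝ) / (HF K h x).card) atTop (𝓝 (Gp γ)) := by
  have hN : ∀ γ', Tendsto (fun x => ((Ns K h γ' x).card : ℝ) / (HF K h x).card) atTop (𝓝 (Gp γ')) :=
    fun γ' => cdf_lim K h hh γ'
  rw [tendsto_order]
  constructor
  · intro a ha
    have h1 : Tendsto (fun ε : ℝ => Gp (γ - 3 * ε)) (𝓝[>] 0) (𝓝 (Gp γ)) := by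
      have : Continuous (fun ε : ℝ => Gp (γ - 3 * ε)) := Gp_cont.comp (by fun_prop)
      simpa using (this.tendsto 0).mono_left nhdsWithin_le_nhds
    obtain ⟨ε, h2, hε⟩ := ((h1.eventually (lt_mem_nhds ha)).and self_mem_nhdsWithin).exists
    have hε : 0 < ε := hε
    have h3 := (hN (γ - 3 * ε)).sub (ExS_lim K h hh hε)
    rw [sub_zero] at h3
    filter_upwards [h3.eventually (lt_mem_nhds h2), sandwich K h γ hε] with x hx hs
    refine hx.trans_le ?_
    rw [← sub_div]
    refine div_le_div_of_nonneg_right ?_ (Nat.cast_nonneg _)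
    linarith
  · intro a ha
    have h1 : Tendsto (fun ε : ℝ => Gp (γ + 3 * ε)) (𝓝[>] 0) (𝓝 (Gp γ)) := by
      have : Continuous (fun ε : ℝ => Gp (γ + 3 * ε)) := Gp_cont.comp (by fun_prop)
      simpa using (this.tendsto 0).mono_left nhdsWithin_le_nhds
    obtain ⟨ε, h2, hε⟩ := ((h1.eventually (gt_mem_nhds ha)).and self_mem_nhdsWithin).exists
    have hε : 0 < ε := hε
    have h3 := (hN (γ + 3 * ε)).add (ExS_lim K h hh hε)
    rw [add_zero] at h3
    filter_upwards [h3.eventually (gt_mem_nhds h2), sandwich K h γ hε] with x hx hs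
    refine lt_of_le_of_lt ?_ hx
    rw [← add_div]
    refine div_le_div_of_nonneg_right ?_ (Nat.cast_nonneg _)
    linarith

end EK

namespace EK
open NumberField Ideal

theorem prime_of_isPrime_dvd {p m : Ideal (𝓞 K)} (hm : m ≠ 0) (hp : p.IsPrime) (hpm : p ∣ m) : Prime p := by
  have hp0 : p ≠ ⊥ := by
    rintro rfl
    exact hm (zero_dvd_iff.mp hpm)
  exact (Ideal.prime_iff_isPrime hp0).mpr hp

theorem omegaI_eq {x : ℝ} {m : Ideal (𝓞 K)} (hm : m ≠ 0) (hmx : (absNorm m : ℝ) ≤ x) :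
    omegaI K m = omP (primesLE K x) m := by
  classical
  rw [omegaI, omP]
  refine Nat.subtype_card _ fun p => ?_
  rw [Finset.mem_filter, mem_primesLE]
  constructor
  · rintro ⟨⟨hp, _⟩, hpm⟩
    exact ⟨Ideal.isPrime_of_prime hp, hpm⟩
  · rintro ⟨hp, hpm⟩
    exact ⟨⟨prime_of_isPrime_dvd K hm hp hpm, (norm_le_of_dvd hm hpm).trans hmx⟩, hpm⟩

theorem isHFree_iff {h : ℕ} (hh : 2 ≤ h) {m : Ideal (𝓞 K)} : IsHFree K h m ↔ m ≠ 0 ∧ HFr h m := by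
  rw [IsHFree, HFr]
  refine and_congr_right fun hm => ⟨fun H p hp => H p (Ideal.isPrime_of_prime hp), fun H p hp hd => ?_⟩
  exact H p (prime_of_isPrime_dvd K hm hp ((dvd_pow_self p (by omega)).trans hd)) hd

end EK

/-- **The Erdős–Kac theorem for `h`-free ideals of a number field.** -/
theorem erdosKac_hFree_ideals (h : ℕ) (hh : 2 ≤ h) (γ : ℝ) :
    Tendsto (fun x : ℝ =>
      (Nat.card {m : Ideal (NumberField.RingOfIntegers K) //
          IsHFree K h m ∧ (Ideal.absNorm m : ℝ) ≤ x ∧ 3 ≤ Ideal.absNorm m ∧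
          ((omegaI K m : ℝ) - Real.log (Real.log (Ideal.absNorm m))) /
            Real.sqrt (Real.log (Real.log (Ideal.absNorm m))) ≤ γ} : ℝ) /
        (Nat.card {m : Ideal (NumberField.RingOfIntegers K) //
          IsHFree K h m ∧ (Ideal.absNorm m : ℝ) ≤ x} : ℝ))
      atTop (𝓝 (gaussPhi γ)) := by
  have hlim := EK.main_lim K h hh γ
  rw [EK.Gp_eq] at hlim
  rw [gaussPhi]
  refine hlim.congr fun x => ?_
  classical
  congr 2
  · symm
    refine Nat.subtype_card _ fun m => ?_
    rw [EK.Bs, Finset.mem_filter, EK.mem_HF, EK.isHFree_iff K hh]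
    constructor
    · rintro ⟨⟨⟨h0, hx⟩, hf⟩, h3, hg⟩
      refine ⟨⟨h0, hf⟩, hx, h3, ?_⟩
      rw [EK.omegaI_eq K h0 hx]
      exact hg
    · rintro ⟨⟨h0, hf⟩, hx, h3, hg⟩
      rw [EK.omegaI_eq K h0 hx] at hg
      exact ⟨⟨⟨h0, hx⟩, hf⟩, h3, hg⟩
  · symm
    refine Nat.subtype_card _ fun m => ?_
    rw [EK.mem_HF, EK.isHFree_iff K hh]
    tauto

end
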